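/- arXiv:2404.02005 — 2 statements merged into one kernel-verified Lean document; each statement's English description precedes it below -/
import Mathlib

section
/- Let (R, m) be an analytically unramified Noetherian local ring with conductor ideal 𝔠. Then for every element x ∈ m, the conductor is not contained in the principal ideal xR: 𝔠 ⊄ xR. -/
open CategoryTheory IsLocalRing

set_option synthInstance.maxHeartbeats 1000000
set_option maxHeartbeats 1000000

noncomputable section

/-- The integral closure `R̄` of `R` in its total ring of fractions, viewed as a type
(with its canonical `R`-algebra and `R`-module structures). -/
abbrev IntClosure (R : Type) [CommRing R] : Type :=
  ↥(integralClosure R (FractionRing R))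

/-- The quotient `R`-module `R̄/R`. -/
abbrev IntClosureQuot (R : Type) [CommRing R] : Type :=
  IntClosure R ⧸ LinearMap.range (Algebra.linearMap R (IntClosure R))

/-- The conductor ideal `𝔠 = Ann_R(R̄/R) = {r : R | r • R̄ ⊆ R}`. -/
def conductorIdeal (R : Type) [CommRing R] : Ideal R :=
  Module.annihilator R (IntClosureQuot R)

/-- A local ring `R` is analytically unramified if its `m`-adic completion is reduced. -/
def AnalyticallyUnramified (R : Type) [CommRing R] [IsLocalRing R] : Prop :=
  IsReduced (AdicCompletion (maximalIdeal R) R)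

/-- `R` is normal: it is reduced and equal to its integral closure `R̄` in its total
ring of fractions. -/
def IsNormalRing (R : Type) [CommRing R] : Prop :=
  IsReduced R ∧ integralClosure R (FractionRing R) = ⊥

/-- `Ext^i_R(M, N)` as a type. -/
abbrev ExtMod (R : Type) [CommRing R] (M : Type) [AddCommGroup M] [Module R M]
    (N : Type) [AddCommGroup N] [Module R N] (i : ℕ) : Type :=
  ↥(((Ext R (ModuleCat.{0} R) i).obj (Opposite.op (ModuleCat.of R M))).obj (ModuleCat.of R N))

/-- `M` has finite projective dimension over `R`:
`Ext^i_R(M, -)` vanishes for all `i` bigger than some `n`. -/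
def HasFiniteProjDim (R : Type) [CommRing R] (M : Type) [AddCommGroup M] [Module R M] : Prop :=
  ∃ n : ℕ, ∀ (N : ModuleCat.{0} R) (i : ℕ), n < i →
    Subsingleton ↥(((Ext R (ModuleCat.{0} R) i).obj (Opposite.op (ModuleCat.of R M))).obj N)

/-- `M` has finite injective dimension over `R`:
`Ext^i_R(-, M)` vanishes for all `i` bigger than some `n`. -/
def HasFiniteInjDim (R : Type) [CommRing R] (M : Type) [AddCommGroup M] [Module R M] : Prop :=
  ∃ n : ℕ, ∀ (N : ModuleCat.{0} R) (i : ℕ), n < i →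
    Subsingleton ↥(((Ext R (ModuleCat.{0} R) i).obj (Opposite.op N)).obj (ModuleCat.of R M))

/-- The depth of an `R`-module `M` over a local ring `(R, m)`: the least `i` such that
`Ext^i_R(R/m, M) ≠ 0` (`⊤` if there is no such `i`), valued in `WithBot (WithTop ℕ)`
for easy comparison with `ringKrullDim`. -/
def moduleDepth (R : Type) [CommRing R] [IsLocalRing R]
    (M : Type) [AddCommGroup M] [Module R M] : WithBot (WithTop ℕ) :=
  sInf { n : WithBot (WithTop ℕ) |
    ∃ i : ℕ, n = (i : ℕ) ∧ Nontrivial (ExtMod R (ResidueField R) M i) }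

/-- A Noetherian local ring is Gorenstein if it has finite injective dimension
as a module over itself. -/
def IsGorensteinLocal (R : Type) [CommRing R] [IsLocalRing R] : Prop :=
  IsNoetherianRing R ∧ HasFiniteInjDim R R

/-- A Noetherian local ring is Cohen–Macaulay if its depth equals its Krull dimension. -/
def IsCohenMacaulayLocal (R : Type) [CommRing R] [IsLocalRing R] : Prop :=
  IsNoetherianRing R ∧ moduleDepth R R = ringKrullDim R

/-- A ring is Cohen–Macaulay if it is Noetherian and all its localizations at primes
are Cohen–Macaulay local rings. -/
def IsCohenMacaulayRing (A : Type) [CommRing A] : Prop :=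
  IsNoetherianRing A ∧ ∀ (p : Ideal A) [p.IsPrime],
    moduleDepth (Localization.AtPrime p) (Localization.AtPrime p) =
      ringKrullDim (Localization.AtPrime p)

/-- Serre's condition `(S2)`: `depth (R_p) ≥ min {2, height p}` for every prime `p`
(`height p` being the dimension of `R_p`). -/
def SerreS2 (R : Type) [CommRing R] : Prop :=
  ∀ (p : Ideal R) [p.IsPrime],
    min 2 (ringKrullDim (Localization.AtPrime p)) ≤
      moduleDepth (Localization.AtPrime p) (Localization.AtPrime p)

/-- A Noetherian local ring is regular if its maximal ideal can be generated by
`dim R` elements. -/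
def IsRegularLocal (A : Type) [CommRing A] [IsLocalRing A] : Prop :=
  IsNoetherianRing A ∧ ∃ s : Finset A, Ideal.span (s : Set A) = maximalIdeal A ∧
    (s.card : WithBot (WithTop ℕ)) = ringKrullDim A

/-- Serre's condition `(R1)`: `R_p` is regular for every prime `p` of height at most `1`. -/
def SerreR1 (R : Type) [CommRing R] : Prop :=
  ∀ (p : Ideal R) [p.IsPrime], ringKrullDim (Localization.AtPrime p) ≤ 1 →
    IsRegularLocal (Localization.AtPrime p)

/-- The `i`-th local cohomology `H^i_m(M)` of `M` with support in the maximal ideal,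
as a type. -/
abbrev localCohMod (R : Type) [CommRing R] [IsLocalRing R] (i : ℕ)
    (M : Type) [AddCommGroup M] [Module R M] : Type :=
  ↥((localCohomology (maximalIdeal R) i).obj (ModuleCat.of R M))

/-- `x : Fin d → R` is a system of parameters for the local ring `(R, m)`:
`d = dim R`, all `x i` lie in `m`, and the ideal they generate is `m`-primary
(its radical is `m`). -/
def IsSystemOfParameters (R : Type) [CommRing R] [IsLocalRing R] {d : ℕ}
    (x : Fin d → R) : Prop :=
  (d : WithBot (WithTop ℕ)) = ringKrullDim R ∧ (∀ i, x i ∈ maximalIdeal R) ∧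
    (Ideal.span (Set.range x)).radical = maximalIdeal R

/-- `E` is an injective hull of the residue field of the local ring `R`:
`E` is injective and contains a copy of `R/m` as an essential submodule. -/
def IsInjectiveHullOfResidueField (R : Type) [CommRing R] [IsLocalRing R]
    (E : Type) [AddCommGroup E] [Module R E] : Prop :=
  Module.Injective R E ∧ ∃ f : ResidueField R →ₗ[R] E, Function.Injective f ∧
    ∀ N : Submodule R E, N ≠ ⊥ → N ⊓ LinearMap.range f ≠ ⊥

lemma aux_tensor_D_eq_zero_iff {F A σ : Type*} [CommRing F] [CommRing A] [Algebra F A]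
    [Algebra (MvPolynomial σ F) A] [IsScalarTower F (MvPolynomial σ F) A]
    (f : MvPolynomial σ F) :
    ((1 : A) ⊗ₜ[MvPolynomial σ F] (KaehlerDifferential.D F (MvPolynomial σ F) f) = 0) ↔
      ∀ i, algebraMap (MvPolynomial σ F) A (MvPolynomial.pderiv i f) = 0 := by
  let b := (KaehlerDifferential.mvPolynomialBasis F σ).baseChange A
  rw [← b.repr.map_eq_zero_iff, Finsupp.ext_iff]
  simp [b, Module.Basis.baseChange_repr_tmul, Algebra.smul_def]

lemma aux_fs_inj {F k σ : Type*} [Field F] [Field k] [Algebra F k] 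
    (g : MvPolynomial σ F →ₐ[F] k) (hg : Function.Surjective g) [Algebra.FormallySmooth F k]
    (f : MvPolynomial σ F) (hf : g f = 0) (hd : ∀ i, g (MvPolynomial.pderiv i f) = 0) :
    f ∈ RingHom.ker g ^ 2 := by
  let _ : Algebra (MvPolynomial σ F) k := g.toRingHom.toAlgebra
  have : IsScalarTower F (MvPolynomial σ F) k := .of_algebraMap_eq (fun x => (g.commutes x).symm)
  have hs : Function.Surjective (algebraMap (MvPolynomial σ F) k) := hg
  obtain ⟨l, hl⟩ := (Algebra.FormallySmooth.iff_split_injection (R := F) hs).mp inferInstance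
  have hfk : f ∈ RingHom.ker (algebraMap (MvPolynomial σ F) k) := hf
  have h0 : KaehlerDifferential.kerCotangentToTensor F (MvPolynomial σ F) k
      (Ideal.toCotangent _ ⟨f, hfk⟩) = 0 := by
    rw [KaehlerDifferential.kerCotangentToTensor_toCotangent]
    exact (aux_tensor_D_eq_zero_iff f).mpr hd
  have h1 := congrArg l h0
  rw [← LinearMap.comp_apply, hl, map_zero, LinearMap.id_apply, Ideal.toCotangent_eq_zero] at h1
  exact h1

lemma aux_left_inv {A M N : Type*} [CommRing A] (I : Ideal A) (hI : I.IsMaximal)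
    [AddCommGroup M] [AddCommGroup N] [Module A M] [Module A N] (f : M →ₗ[A] N)
    (hf : LinearMap.ker f = ⊥)
    (hM : Module.IsTorsionBySet A M I) (hN : Module.IsTorsionBySet A N I) :
    ∃ l : N →ₗ[A] M, l ∘ₗ f = LinearMap.id := by
  let _ := hM.module
  let _ := hN.module
  let _ := Ideal.Quotient.field I
  have h1 : IsScalarTower A (A ⧸ I) M := hM.isScalarTower
  have h2 : IsScalarTower A (A ⧸ I) N := hN.isScalarTower
  have hsm : ∀ (r : A ⧸ I) (x : M), f (r • x) = r • f x := by
    intro r x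
    obtain ⟨r, rfl⟩ := Ideal.Quotient.mk_surjective r
    change f (algebraMap A (A ⧸ I) r • x) = algebraMap A (A ⧸ I) r • f x
    rw [IsScalarTower.algebraMap_smul, IsScalarTower.algebraMap_smul, map_smul]
  let f' : M →ₗ[A ⧸ I] N := { f with map_smul' := hsm }
  have hf' : LinearMap.ker f' = ⊥ := by
    rw [LinearMap.ker_eq_bot'] at hf ⊢
    exact hf
  obtain ⟨l, hl⟩ := LinearMap.exists_leftInverse_of_injective f' hf'
  refine ⟨l.restrictScalars A, ?_⟩
  ext x
  exact DFunLike.congr_fun hl x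

theorem formallySmooth_of_perfect (F k : Type*) [Field F] [PerfectField F] [Field k]
    [Algebra F k] : Algebra.FormallySmooth F k := by
  let g : MvPolynomial k F →ₐ[F] k := MvPolynomial.aeval id
  have hg : Function.Surjective g := fun x => ⟨MvPolynomial.X x, by simp [g]⟩
  let _ : Algebra (MvPolynomial k F) k := g.toRingHom.toAlgebra
  have : IsScalarTower F (MvPolynomial k F) k := .of_algebraMap_eq (fun x => (g.commutes x).symm)
  have hs : Function.Surjective (algebraMap (MvPolynomial k F) k) := hg
  have key : ∀ f : MvPolynomial k F, g f = 0 → (∀ i, g (MvPolynomial.pderiv i f) = 0) →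
      f ∈ RingHom.ker g ^ 2 := by
    intro f hf hd
    classical
    let k0 := IntermediateField.adjoin F (f.vars : Set k)
    have : Algebra.EssFiniteType F k0 := by
      rw [IntermediateField.essFiniteType_iff]
      exact ⟨f.vars, rfl⟩
    have : Algebra.FormallySmooth F k0 := .of_perfectField
    let g0 : MvPolynomial k0 F →ₐ[F] k0 := MvPolynomial.aeval id
    have hg0 : Function.Surjective g0 := fun x => ⟨MvPolynomial.X x, by simp [g0]⟩
    have hcomp : ∀ q : MvPolynomial k0 F, g (MvPolynomial.rename (↑) q) = (g0 q : k) := by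
      intro q
      have : g.comp (MvPolynomial.rename ((↑) : k0 → k)) = k0.val.comp g0 := by
        ext i; simp [g, g0]
      exact DFunLike.congr_fun this q
    obtain ⟨f0, hf0⟩ := (MvPolynomial.exists_rename_eq_of_vars_subset_range f ((↑) : k0 → k)
      Subtype.val_injective (by
      intro x hx
      exact ⟨⟨x, IntermediateField.subset_adjoin _ _ hx⟩, rfl⟩))
    have h1 : f0 ∈ RingHom.ker g0 ^ 2 := by
      apply aux_fs_inj g0 hg0
      · rw [← hf0, hcomp] at hf; exact_mod_cast hf
      · intro i
        have := hd (i : k)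
        rw [← hf0, MvPolynomial.pderiv_rename Subtype.val_injective, hcomp] at this
        exact_mod_cast this
    have h2 := Ideal.mem_map_of_mem (MvPolynomial.rename ((↑) : k0 → k) : _ →ₐ[F] _) h1
    rw [Ideal.map_pow, hf0] at h2
    refine Ideal.pow_right_mono ?_ 2 h2
    rw [Ideal.map_le_iff_le_comap]
    intro q hq
    simp only [RingHom.mem_ker, Ideal.mem_comap] at hq ⊢
    rw [hcomp, hq]; rfl
  rw [Algebra.FormallySmooth.iff_split_injection (R := F) hs]
  have hinj : LinearMap.ker (KaehlerDifferential.kerCotangentToTensor F (MvPolynomial k F) k) = ⊥ := by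
    rw [LinearMap.ker_eq_bot']
    intro m hm
    obtain ⟨⟨f, hf⟩, rfl⟩ := Ideal.toCotangent_surjective _ m
    rw [KaehlerDifferential.kerCotangentToTensor_toCotangent] at hm
    rw [Ideal.toCotangent_eq_zero]
    exact key f hf ((aux_tensor_D_eq_zero_iff f).mp hm)
  apply aux_left_inv (RingHom.ker (algebraMap (MvPolynomial k F) k))
    (RingHom.ker_isMaximal_of_surjective _ hs) _ hinj
  · intro x ⟨a, ha⟩
    obtain ⟨⟨f, hf⟩, rfl⟩ := Ideal.toCotangent_surjective _ x
    change a • _ = _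
    rw [← map_smul, Ideal.toCotangent_eq_zero]
    simp only [smul_eq_mul, pow_two, SetLike.mk_smul_mk]
    exact Ideal.mul_mem_mul ha hf
  · intro x ⟨a, ha⟩
    change a • x = 0
    rw [← IsScalarTower.algebraMap_smul k a x, show algebraMap _ k a = 0 from ha, zero_smul]

lemma exists_mvps_hom {S B : Type} [CommRing S] [CommRing B] (I : Ideal B) [IsAdicComplete I B]
    (f : S →+* B) {n : ℕ} (x : Fin n → B) (hx : ∀ i, x i ∈ I) :
    ∃ g : MvPowerSeries (Fin n) S →+* B, (∀ s, g (MvPowerSeries.C s) = f s) ∧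
      ∀ i, g (MvPowerSeries.X i) = x i := by
  let _ : WithIdeal B := ⟨I⟩
  let _ : UniformSpace S := ⊥
  have : DiscreteUniformity S := ⟨rfl⟩
  have hI : IsAdic I := by rfl
  have hc := (IsAdic.isAdicComplete_iff hI).mp inferInstance
  have := hc.1
  have := hc.2
  have hf : Continuous f := continuous_of_discreteTopology
  have ha : MvPowerSeries.HasEval x := by
    refine ⟨fun i => ?_, by simp⟩
    refine (hI.hasBasis_nhds_zero.tendsto_right_iff).mpr fun k _ => ?_
    filter_upwards [Filter.eventually_ge_atTop k] with m hm
    exact Ideal.pow_le_pow_right hm (Ideal.pow_mem_pow (hx i) m)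
  refine ⟨MvPowerSeries.eval₂Hom hf ha, fun s => ?_, fun i => ?_⟩
  · rw [MvPowerSeries.coe_eval₂Hom, MvPowerSeries.eval₂_C]
  · rw [MvPowerSeries.coe_eval₂Hom, MvPowerSeries.eval₂_X]

lemma aux_precomplete_pi {A : Type} [CommRing A] (I : Ideal A) [IsAdicComplete I A] {n : ℕ} :
    IsPrecomplete I (Fin n → A) := by
  refine ⟨fun f hf => ?_⟩
  have h1 : ∀ i : Fin n, ∃ L : A, ∀ m, f m i ≡ L [SMOD (I ^ m • ⊤ : Submodule A A)] := by
    intro i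
    refine IsPrecomplete.prec (I := I) inferInstance fun {m k} hmk => ?_
    have := hf hmk
    rw [SModEq.sub_mem] at this ⊢
    have h2 := Submodule.mem_map_of_mem (f := LinearMap.proj (R := A) (φ := fun _ : Fin n => A) i) this
    rw [Submodule.map_smul''] at h2
    exact Submodule.smul_mono le_rfl le_top h2
  choose L hL using h1
  refine ⟨L, fun m => ?_⟩
  rw [SModEq.sub_mem, pi_eq_sum_univ' (f m - L)]
  refine Submodule.sum_mem _ fun i _ => ?_
  refine Submodule.smul_mem_smul ?_ trivial
  have := hL i m
  rw [SModEq.sub_mem] at this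
  simpa using this

/-- complete Nakayama -/
lemma finite_of_quot {A M : Type} [CommRing A] [AddCommGroup M] [Module A M] (I : Ideal A)
    [IsAdicComplete I A] [IsHausdorff I M] {n : ℕ} (b : Fin n → M)
    (hb : ∀ m : M, ∃ c : Fin n → A, m - ∑ i, c i • b i ∈ (I • ⊤ : Submodule A M)) :
    Module.Finite A M := by
  let f : (Fin n → A) →ₗ[A] M := Fintype.linearCombination A b
  have : Function.Surjective f := by
    have : IsPrecomplete I (Fin n → A) := aux_precomplete_pi I
    apply surjective_of_mkQ_comp_surjective (I := I)
    intro y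
    obtain ⟨m, rfl⟩ := Submodule.mkQ_surjective _ y
    obtain ⟨c, hc⟩ := hb m
    refine ⟨c, ?_⟩
    simp only [LinearMap.comp_apply, Submodule.mkQ_apply]
    symm
    rw [Submodule.Quotient.eq]
    simpa [f, Fintype.linearCombination_apply] using hc
  exact Module.Finite.of_surjective f this

lemma exists_mvps_finite {S B : Type} [CommRing S] [CommRing B] (I : Ideal B) [IsAdicComplete I B]
    (f : S →+* B) {n : ℕ} (x : Fin n → B) (hx : ∀ i, x i ∈ I) {k : ℕ} (b : Fin k → B)
    (hb : ∀ m : B, ∃ c : Fin k → S, m - ∑ i, f (c i) * b i ∈ Ideal.span (Set.range x)) :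
    ∃ g : MvPowerSeries (Fin n) S →+* B, (∀ s, g (MvPowerSeries.C s) = f s) ∧
      (∀ i, g (MvPowerSeries.X i) = x i) ∧ g.Finite := by
  obtain ⟨g, hg, hgx⟩ := exists_mvps_hom I f x hx
  refine ⟨g, hg, hgx, ?_⟩
  algebraize [g]
  have hmap : (Ideal.span (Set.range (MvPowerSeries.X : Fin n → MvPowerSeries (Fin n) S))).map
      (algebraMap (MvPowerSeries (Fin n) S) B) = Ideal.span (Set.range x) := by
    rw [Ideal.map_span, ← Set.range_comp]
    congr 2
    ext1 i
    exact hgx i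
  have hH : IsHausdorff (Ideal.span (Set.range (MvPowerSeries.X : Fin n → MvPowerSeries (Fin n) S))) B := by
    rw [← IsHausdorff.map_algebraMap_iff (S := B), hmap]
    have hle : Ideal.span (Set.range x) ≤ I := by
      rw [Ideal.span_le]; rintro _ ⟨i, rfl⟩; exact hx i
    refine ⟨fun y hy => IsHausdorff.haus (I := I) inferInstance y fun m => ?_⟩
    have := hy m
    rw [SModEq.zero] at this ⊢
    exact Submodule.smul_mono_left (Ideal.pow_right_mono hle m) this
  refine finite_of_quot (Ideal.span (Set.range (MvPowerSeries.X : Fin n → MvPowerSeries (Fin n) S))) b ?_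
  intro m
  obtain ⟨c, hc⟩ := hb m
  refine ⟨fun i => MvPowerSeries.C (c i), ?_⟩
  rw [Ideal.smul_top_eq_map, hmap]
  simp only [Algebra.smul_def, RingHom.algebraMap_toAlgebra, hg]
  exact hc

open PowerSeries in
lemma ps_almost {S : Type} [CommRing S] [IsDomain S] [IsNoetherianRing S] [IsIntegrallyClosed S]
    (n : ℕ) : ∀ h : (FractionRing S)⟦X⟧, IsAlmostIntegral S⟦X⟧ h →
      coeff n h ∈ (algebraMap S (FractionRing S)).range := by
  have h0 : ∀ h : (FractionRing S)⟦X⟧, IsAlmostIntegral S⟦X⟧ h →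
      constantCoeff h ∈ (algebraMap S (FractionRing S)).range := by
    rintro h ⟨c, hc, hn⟩
    have hc0 : c ≠ 0 := nonZeroDivisors.ne_zero hc
    obtain ⟨d, hd⟩ := PowerSeries.X_pow_order_dvd (φ := c)
    set k := c.order.toNat with hk
    have hd0 : coeff k c = coeff 0 d := by
      rw [hd, coeff_X_pow_mul']; simp
    have hck : coeff k c ≠ 0 := by
      rw [hk]; exact PowerSeries.coeff_order hc0
    have hmapc : PowerSeries.map (algebraMap S (FractionRing S)) c = X ^ k * PowerSeries.map (algebraMap S (FractionRing S)) d := by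
      conv_lhs => rw [hd]
      rw [map_mul, map_pow, PowerSeries.map_X]
    have : IsAlmostIntegral S (constantCoeff h) := by
      refine ⟨coeff k c, mem_nonZeroDivisors_of_ne_zero hck, fun m => ?_⟩
      obtain ⟨e, he⟩ := hn m
      refine ⟨coeff k e, ?_⟩
      have h2 := congrArg (coeff k) he
      rw [PowerSeries.algebraMap_apply'', coeff_map] at h2
      rw [h2, hd0, Algebra.smul_def, Algebra.smul_def, PowerSeries.algebraMap_apply'', hmapc, mul_assoc,
        coeff_X_pow_mul']
      simp only [le_refl, if_true, Nat.sub_self, coeff_zero_eq_constantCoeff_apply, map_mul, map_pow]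
      rw [← coeff_zero_eq_constantCoeff_apply, coeff_map, coeff_zero_eq_constantCoeff_apply]
    obtain ⟨y, hy⟩ := IsIntegrallyClosed.isIntegral_iff.mp this.isIntegral
    exact ⟨y, hy⟩
  induction n with
  | zero => intro h hh; simpa using h0 h hh
  | succ n ih =>
    intro h hh
    obtain ⟨s, hs⟩ := h0 h hh
    obtain ⟨h', hh'⟩ : X ∣ h - C (constantCoeff h) := by
      rw [X_dvd_iff]; simp
    have h1 : IsAlmostIntegral S⟦X⟧ (X * h') := by
      rw [← hh', ← mem_completeIntegralClosure]
      refine Subalgebra.sub_mem _ hh ?_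
      rw [← hs]
      convert Subalgebra.algebraMap_mem _ (C s : S⟦X⟧) using 1
      rw [PowerSeries.algebraMap_apply'']; simp
    have h2 : IsAlmostIntegral S⟦X⟧ h' := by
      obtain ⟨c, hc, hn⟩ := h1
      refine ⟨c, hc, fun m => ?_⟩
      obtain ⟨e, he⟩ := hn m
      refine ⟨PowerSeries.mk fun i => coeff (i + m) e, ?_⟩
      ext i
      have h3 := congrArg (coeff (i + m)) he
      rw [mul_pow, ← mul_smul_comm, coeff_X_pow_mul, PowerSeries.algebraMap_apply'', coeff_map] at h3
      rw [← h3, PowerSeries.algebraMap_apply'', coeff_map, coeff_mk]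
    have h3 := ih h' h2
    rwa [← coeff_succ_X_mul, ← hh', map_sub, coeff_succ_C, sub_zero] at h3

open PowerSeries in
lemma ps_integrallyClosed (S : Type) [CommRing S] [IsDomain S] [IsNoetherianRing S]
    [IsIntegrallyClosed S] : IsIntegrallyClosed S⟦X⟧ := by
  let K := FractionRing S
  let K' := FractionRing S⟦X⟧
  let L := FractionRing K⟦X⟧
  have hinj0 : Function.Injective (algebraMap S⟦X⟧ K⟦X⟧) := by
    have := PowerSeries.map_injective (algebraMap S K) (IsFractionRing.injective S K)
    exact this
  have hinjL : Function.Injective (algebraMap K⟦X⟧ L) := IsFractionRing.injective _ _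
  have hinj : Function.Injective ((algebraMap K⟦X⟧ L).comp (algebraMap S⟦X⟧ K⟦X⟧)) :=
    hinjL.comp hinj0
  let φ : K' →+* L := IsFractionRing.lift hinj
  have hφ : ∀ a, φ (algebraMap S⟦X⟧ K' a) = algebraMap K⟦X⟧ L (algebraMap S⟦X⟧ K⟦X⟧ a) :=
    fun a => IsFractionRing.lift_algebraMap hinj a
  rw [isIntegrallyClosed_iff K']
  intro y hy
  have h1 : IsIntegral K⟦X⟧ (φ y) := by
    obtain ⟨p, hp, hpy⟩ := hy
    refine ⟨p.map (algebraMap S⟦X⟧ K⟦X⟧), hp.map _, ?_⟩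
    have := congrArg φ hpy
    rw [map_zero, Polynomial.hom_eval₂] at this
    rw [Polynomial.eval₂_map, ← this]
    congr 1
    ext a : 1
    exact (hφ a).symm
  obtain ⟨h, hh⟩ := IsIntegrallyClosed.isIntegral_iff.mp h1
  have h2 : IsIntegral S⟦X⟧ h := by
    obtain ⟨p, hp, hpy⟩ := hy
    refine ⟨p, hp, hinjL ?_⟩
    have := congrArg φ hpy
    rw [map_zero, Polynomial.hom_eval₂, ← hh] at this
    rw [Polynomial.hom_eval₂, map_zero, ← this]
    congr 1
    ext a : 1
    exact (hφ a).symm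
  obtain ⟨a, b, hb, rfl⟩ := IsFractionRing.div_surjective (A := S⟦X⟧) y
  have hb0 : algebraMap S⟦X⟧ K' b ≠ 0 := by
    simpa using nonZeroDivisors.ne_zero hb
  have h3 : b • h = algebraMap _ _ a := by
    apply hinjL
    rw [Algebra.smul_def, map_mul, hh, ← hφ, ← map_mul, mul_div_cancel₀ _ hb0, hφ]
  have h4 : IsAlmostIntegral S⟦X⟧ h := h2.isAlmostIntegral_of_exists_smul_mem_range ⟨b, hb, a, h3.symm⟩
  choose g hg using fun n => ps_almost n h h4
  have hg' : algebraMap S⟦X⟧ K⟦X⟧ (PowerSeries.mk g) = h := by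
    ext n
    rw [PowerSeries.algebraMap_apply'', coeff_map, coeff_mk, hg]
  refine ⟨PowerSeries.mk g, φ.injective ?_⟩
  rw [hφ, hg', hh]

def N2pi (p : ℕ) (S : Type) [CommRing S] : Prop :=
  ∀ (L : Type) [Field L] [Algebra S L] [FaithfulSMul S L] (e : ℕ),
    (∀ y : L, ∃ a b : S, b ≠ 0 ∧ algebraMap S L b * y ^ (p ^ e) = algebraMap S L a) →
    (∃ d : ℕ, ∀ v : Fin d → L, ¬ LinearIndependent S v) →
    Module.Finite S (integralClosure S L)

lemma mem_range_of_integral {A L : Type} [CommRing A] [IsDomain A] [IsIntegrallyClosed A]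
    [Field L] [Algebra A L] [FaithfulSMul A L] {z : L} (hz : IsIntegral A z) {a b : A} (hb : b ≠ 0)
    (h : algebraMap A L b * z = algebraMap A L a) : ∃ c, algebraMap A L c = z := by
  let K := FractionRing A
  have hinj : Function.Injective (algebraMap A L) := FaithfulSMul.algebraMap_injective A L
  let φ : K →+* L := IsFractionRing.lift hinj
  have hφ : ∀ a, φ (algebraMap A K a) = algebraMap A L a := fun a => IsFractionRing.lift_algebraMap hinj a
  have hb' : algebraMap A L b ≠ 0 := by
    rw [Ne, map_eq_zero_iff _ hinj]; exact hb
  have hz' : φ (algebraMap A K a / algebraMap A K b) = z := by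
    rw [map_div₀, hφ, hφ, ← h, mul_div_cancel_left₀ _ hb']
  have h1 : IsIntegral A (algebraMap A K a / algebraMap A K b) := by
    obtain ⟨p, hp, hpy⟩ := hz
    refine ⟨p, hp, φ.injective ?_⟩
    rw [Polynomial.hom_eval₂, map_zero, hz', ← hpy]
    congr 1
    ext a
    exact hφ a
  obtain ⟨c, hc⟩ := IsIntegrallyClosed.isIntegral_iff.mp h1
  exact ⟨c, by rw [← hφ, hc, hz']⟩

lemma N2pi_domain {p : ℕ} {S N : Type} [CommRing S] [IsDomain S] [IsNoetherianRing S] (hp : 0 < p)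
    (hS : N2pi p S) [CommRing N] [IsDomain N] [Algebra S N] [FaithfulSMul S N] (e : ℕ)
    (hq : ∀ y : N, ∃ a : S, y ^ (p ^ e) = algebraMap S N a)
    (hd : ∃ d : ℕ, ∀ v : Fin d → N, ¬ LinearIndependent S v) : Module.Finite S N := by
  let L := FractionRing N
  have hNL : Function.Injective (algebraMap N L) := IsFractionRing.injective N L
  have hSN : Function.Injective (algebraMap S N) := FaithfulSMul.algebraMap_injective S N
  have hSL : Function.Injective (algebraMap S L) := by
    rw [IsScalarTower.algebraMap_eq S N L]
    exact hNL.comp hSN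
  have : FaithfulSMul S L := (faithfulSMul_iff_algebraMap_injective S L).mpr hSL
  have hqpos : 0 < p ^ e := pow_pos hp e
  have key : ∀ y : L, ∃ (n : N) (b : S), b ≠ 0 ∧ algebraMap S L b * y = algebraMap N L n := by
    intro y
    obtain ⟨n, m, hm, rfl⟩ := IsFractionRing.div_surjective (A := N) y
    obtain ⟨s, hs⟩ := hq m
    have hm0 : m ≠ 0 := nonZeroDivisors.ne_zero hm
    refine ⟨n * m ^ (p ^ e - 1), s, ?_, ?_⟩
    · rintro rfl
      rw [map_zero] at hs
      exact hm0 (pow_eq_zero_iff hqpos.ne' |>.mp hs)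
    · rw [IsScalarTower.algebraMap_apply S N L, ← hs]
      have : algebraMap N L m ≠ 0 := by rwa [Ne, map_eq_zero_iff _ hNL]
      obtain ⟨k, hk⟩ : ∃ k, p ^ e = k + 1 := ⟨p ^ e - 1, by omega⟩
      rw [hk]
      simp only [map_pow, map_mul, Nat.add_sub_cancel]
      rw [pow_succ, mul_assoc, mul_div_cancel₀ _ this, mul_comm]
  have hfin : Module.Finite S (integralClosure S L) := by
    apply hS L e
    · intro y
      obtain ⟨n, b, hb, h⟩ := key y
      obtain ⟨s, hs⟩ := hq n
      refine ⟨s, b ^ (p ^ e), pow_ne_zero _ hb, ?_⟩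
      rw [map_pow, ← mul_pow, h, ← map_pow, hs, ← IsScalarTower.algebraMap_apply]
    · obtain ⟨d, hd⟩ := hd
      refine ⟨d, fun v hv => ?_⟩
      choose n b hb h using fun i => key (v i)
      apply hd n
      have h1 : LinearIndependent S (fun i => b i • v i) := by
        rw [Fintype.linearIndependent_iff] at hv ⊢
        intro g hg i
        have := hv (fun i => g i * b i) (by simpa [mul_smul] using hg) i
        exact (mul_eq_zero.mp this).resolve_right (hb i)
      have h2 : (fun i => b i • v i) = (IsScalarTower.toAlgHom S N L).toLinearMap ∘ n := by
        ext i
        simp [Algebra.smul_def, h i]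
      rw [h2] at h1
      exact h1.of_comp _
  have hint : ∀ n : N, algebraMap N L n ∈ integralClosure S L := by
    intro n
    obtain ⟨s, hs⟩ := hq n
    have : IsIntegral S (algebraMap N L n ^ (p ^ e)) := by
      rw [← map_pow, hs, ← IsScalarTower.algebraMap_apply]
      exact isIntegral_algebraMap
    exact IsIntegral.of_pow hqpos this
  let f : N →ₗ[S] integralClosure S L :=
    ((IsScalarTower.toAlgHom S N L).codRestrict (integralClosure S L) hint).toLinearMap
  refine Module.Finite.of_injective f ?_
  intro x y hxy
  exact hNL (congrArg Subtype.val hxy)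

lemma fg_mod_ker {R M N : Type} [CommRing R] [AddCommGroup M] [AddCommGroup N] [Module R M]
    [Module R N] (f : M →ₗ[R] N) (h : (LinearMap.range f).FG) :
    ∃ s : Finset M, ∀ m, ∃ c ∈ Submodule.span R (s : Set M), f (m - c) = 0 := by
  have h' : ((⊤ : Submodule R M).map f).FG := by rwa [← LinearMap.range_eq_map]
  classical
  obtain ⟨t, ht⟩ := h
  have : ∀ y : t, ∃ x, f x = y := fun y => by
    have : (y : N) ∈ LinearMap.range f := ht ▸ Submodule.subset_span y.2
    exact this
  choose g hg using this
  refine ⟨Finset.univ.image g, fun m => ?_⟩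
  have h1 : f m ∈ Submodule.map f (Submodule.span R ((Finset.univ.image g : Finset M) : Set M)) := by
    rw [Submodule.map_span]
    have h2 : f m ∈ Submodule.span R (t : Set N) := ht ▸ LinearMap.mem_range_self f m
    refine Submodule.span_mono ?_ h2
    intro y hy
    exact ⟨g ⟨y, hy⟩, by simp, hg _⟩
  obtain ⟨c, hc, hfc⟩ := h1
  exact ⟨c, hc, by rw [map_sub, hfc, sub_self]⟩

open PowerSeries in
lemma N2pi_ps {p : ℕ} {S : Type} [CommRing S] [IsDomain S] [IsNoetherianRing S]
    [IsIntegrallyClosed S] [hpc : ExpChar S p] (hS : N2pi p S) : N2pi p S⟦X⟧ := by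
  intro L _ _ _ e hq hd
  have hppos : 0 < p := expChar_pos S p
  have hinj : Function.Injective (algebraMap S⟦X⟧ L) := FaithfulSMul.algebraMap_injective _ L
  have hpcA : ExpChar S⟦X⟧ p := expChar_of_injective_ringHom (PowerSeries.C_injective (R := S)) p
  have hpcL : ExpChar L p := expChar_of_injective_ringHom hinj p
  have hic : IsIntegrallyClosed S⟦X⟧ := ps_integrallyClosed S
  set q := p ^ e with hqdef
  have hqpos : 0 < q := pow_pos hppos e
  let B := integralClosure S⟦X⟧ L
  -- the q-th power map
  have hφ0 : ∀ b : B, ∃ f : S⟦X⟧, algebraMap S⟦X⟧ L f = (b : L) ^ q := by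
    intro b
    obtain ⟨a, c, hc, h⟩ := hq b
    exact mem_range_of_integral (b.2.pow q) hc h
  choose φ0 hφ0' using hφ0
  let φ : B →+* S⟦X⟧ :=
    { toFun := φ0
      map_one' := hinj (by rw [hφ0']; simp)
      map_zero' := hinj (by rw [hφ0']; simp [hqpos.ne'])
      map_mul' := fun a b => hinj (by rw [hφ0', map_mul, hφ0', hφ0']; simp [mul_pow])
      map_add' := fun a b => hinj (by rw [hφ0', map_add, hφ0', hφ0']; simp [hqdef, add_pow_expChar_pow]) }
  have hφ : ∀ b : B, algebraMap S⟦X⟧ L (φ b) = (b : L) ^ q := hφ0'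
  have hφinj : Function.Injective φ := by
    rw [injective_iff_map_eq_zero]
    intro b hb
    have := hφ b
    rw [hb, map_zero] at this
    exact Subtype.ext (pow_eq_zero_iff hqpos.ne' |>.mp this.symm)
  have hφalg : ∀ f : S⟦X⟧, φ (algebraMap S⟦X⟧ B f) = f ^ q := by
    intro f
    apply hinj
    rw [hφ, map_pow]; rfl
  have hex : ∀ (i : ℕ) (b : B), X ^ (i * q) ∣ φ b → ∃ b' : B, b = algebraMap S⟦X⟧ B (X ^ i) * b' := by
    rintro i b ⟨g, hg⟩
    have hX : algebraMap S⟦X⟧ L (X ^ i) ≠ 0 := by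
      rw [Ne, map_eq_zero_iff _ hinj]; exact pow_ne_zero _ X_ne_zero
    have h1 : ((b : L) / algebraMap S⟦X⟧ L (X ^ i)) ^ q = algebraMap S⟦X⟧ L g := by
      rw [div_pow, ← hφ, hg, ← map_pow, ← pow_mul, map_mul, mul_div_cancel_left₀]
      rw [Ne, map_eq_zero_iff _ hinj]; exact pow_ne_zero _ X_ne_zero
    have h2 : (b : L) / algebraMap S⟦X⟧ L (X ^ i) ∈ B := by
      have : IsIntegral S⟦X⟧ (((b : L) / algebraMap S⟦X⟧ L (X ^ i)) ^ q) := by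
        rw [h1]; exact isIntegral_algebraMap
      exact IsIntegral.of_pow hqpos this
    refine ⟨⟨_, h2⟩, Subtype.ext ?_⟩
    change (b : L) = algebraMap S⟦X⟧ L (X ^ i) * (_ / _)
    rw [mul_div_cancel₀ _ hX]
  -- the residue domain
  let ψ : B →+* S := (constantCoeff (R := S)).comp φ
  let Q : Ideal B := RingHom.ker ψ
  have hQp : Q.IsPrime := RingHom.ker_isPrime ψ
  have hQ : ∀ b : B, b ∈ Q ↔ X ∣ φ b := by
    intro b
    rw [X_dvd_iff]; rfl
  let _ : Algebra S B := ((algebraMap S⟦X⟧ B).comp C).toAlgebra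
  have htow : IsScalarTower S S⟦X⟧ B := .of_algebraMap_eq fun _ => rfl
  have hsm : ∀ (s : S) (b : B), s • b = algebraMap S⟦X⟧ B (C s) * b := fun s b => by
    rw [Algebra.smul_def]; rfl
  have hφsm : ∀ (s : S) (b : B), φ (s • b) = C s ^ q * φ b := fun s b => by
    rw [hsm, map_mul, hφalg]
  have hN : Module.Finite S (B ⧸ Q) := by
    have : FaithfulSMul S (B ⧸ Q) := by
      rw [faithfulSMul_iff_algebraMap_injective, injective_iff_map_eq_zero]
      intro s hs
      have h1 : algebraMap S⟦X⟧ B (C s) ∈ Q := Ideal.Quotient.eq_zero_iff_mem.mp hs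
      rw [hQ, hφalg, X_dvd_iff] at h1
      simpa [hqpos.ne'] using h1
    refine N2pi_domain hppos hS e ?_ ?_
    · intro y
      obtain ⟨b, rfl⟩ := Ideal.Quotient.mk_surjective y
      refine ⟨constantCoeff (φ b), ?_⟩
      change _ = Ideal.Quotient.mk Q (algebraMap S⟦X⟧ B (C _))
      rw [← map_pow, Ideal.Quotient.eq, hQ, map_sub, hφalg, map_pow, X_dvd_iff]
      simp [hqdef]
    · obtain ⟨d, hd⟩ := hd
      refine ⟨d, fun v hv => ?_⟩
      choose b hb using fun i => Ideal.Quotient.mk_surjective (v i)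
      apply hd (fun i => (b i : L))
      rw [Fintype.linearIndependent_iff]
      by_contra hcon
      push Not at hcon
      obtain ⟨g, hg, i0, hi0⟩ := hcon
      have hgB : ∑ i, algebraMap S⟦X⟧ B (g i) * b i = 0 := by
        apply Subtype.ext
        rw [ZeroMemClass.coe_zero, ← hg]
        simp [Algebra.smul_def]
      -- divide out X
      have hdesc : ∀ k : ℕ, ∀ g : Fin d → S⟦X⟧, (∑ i, algebraMap S⟦X⟧ B (g i) * b i = 0) →
          coeff k (g i0) = 0 := by
        intro k
        have h0 : ∀ g : Fin d → S⟦X⟧, (∑ i, algebraMap S⟦X⟧ B (g i) * b i = 0) →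
          ∀ i, constantCoeff (g i) = 0 := by
          intro g hg
          rw [Fintype.linearIndependent_iff] at hv
          apply hv
          have h1 := congrArg (Ideal.Quotient.mk Q) hg
          rw [map_sum, map_zero] at h1
          rw [← h1]
          refine Finset.sum_congr rfl fun i _ => ?_
          rw [← hb, Algebra.smul_def, map_mul]
          congr 1
          change Ideal.Quotient.mk Q (algebraMap S⟦X⟧ B (C _)) = _
          rw [Ideal.Quotient.eq, hQ, ← map_sub, hφalg, X_dvd_iff]
          simp [hqpos.ne']
        induction k with
        | zero => intro g hg; simpa using h0 g hg i0
        | succ k ih =>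
          intro g hg
          have h2 : ∀ i, ∃ g' , g i = X * g' := fun i => X_dvd_iff.mpr (h0 g hg i)
          choose g' hg' using h2
          rw [hg', coeff_succ_X_mul]
          apply ih
          have h3 : algebraMap S⟦X⟧ B X * ∑ i, algebraMap S⟦X⟧ B (g' i) * b i = 0 := by
            rw [← hg, Finset.mul_sum]
            refine Finset.sum_congr rfl fun i _ => ?_
            rw [hg' i, map_mul, mul_assoc]
          refine (mul_eq_zero.mp h3).resolve_left ?_
          intro h4
          have := congrArg φ h4
          rw [hφalg, map_zero] at this
          exact pow_ne_zero _ X_ne_zero this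
      apply hi0
      ext k
      rw [hdesc k g hgB, map_zero]
  -- filtration
  let QS : ℕ → Submodule S B := fun i =>
    { carrier := {b | X ^ i ∣ φ b}
      zero_mem' := by simp
      add_mem' := fun {a b} ha hb => by
        simp only [Set.mem_ofPred_eq, map_add] at *; exact dvd_add ha hb
      smul_mem' := fun s b hb => by
        simp only [Set.mem_ofPred_eq, hφsm] at *; exact hb.mul_left _ }
  have hQS : ∀ i b, b ∈ QS i ↔ X ^ i ∣ φ b := fun i b => Iff.rfl
  have hstep : ∀ i, ∃ s : Finset B, ∀ b ∈ QS i, ∃ c ∈ Submodule.span S (s : Set B), b - c ∈ QS (i + 1) := by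
    intro i
    by_cases hcase : ∀ b ∈ QS i, b ∈ QS (i + 1)
    · exact ⟨∅, fun b hb => ⟨0, by simp, by simpa using hcase b hb⟩⟩
    push Not at hcase
    obtain ⟨b1, hb1, hb1'⟩ := hcase
    have hdiv : ∀ b : QS i, ∃ b' : B, (b : B) * b1 ^ (q - 1) = algebraMap S⟦X⟧ B (X ^ i) * b' := by
      intro b
      apply hex
      have h1 : X ^ i ∣ φ b := b.2
      have h2 : X ^ i ∣ φ b1 := hb1
      have h3 : X ^ (i * q) = (X : S⟦X⟧) ^ i * (X ^ i) ^ (q - 1) := by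
        rw [← pow_succ', ← pow_mul, Nat.sub_add_cancel hqpos]
      rw [h3, map_mul, map_pow]
      exact mul_dvd_mul h1 (pow_dvd_pow_of_dvd h2 _)
    choose t ht using hdiv
    have hXB : algebraMap S⟦X⟧ B (X ^ i) ≠ 0 := by
      intro h4
      have := congrArg φ h4
      rw [hφalg, map_zero] at this
      exact pow_ne_zero _ (pow_ne_zero _ X_ne_zero) this
    let T : QS i →ₗ[S] B :=
      { toFun := t
        map_add' := fun a b => by
          apply mul_left_cancel₀ hXB
          rw [← ht, mul_add, ← ht, ← ht]; simp [add_mul]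
        map_smul' := fun s b => by
          apply mul_left_cancel₀ hXB
          rw [← ht, RingHom.id_apply, mul_smul_comm, ← ht]; simp }
    let T' : QS i →ₗ[S] B ⧸ Q := (Ideal.Quotient.mkₐ S Q).toLinearMap ∘ₗ T
    have hker : ∀ b : QS i, T' b = 0 → (b : B) ∈ QS (i + 1) := by
      intro b hb
      have h1 : t b ∈ Q := Ideal.Quotient.eq_zero_iff_mem.mp hb
      rw [hQ] at h1
      have h2 := congrArg φ (ht b)
      rw [map_mul, map_mul, map_pow, hφalg] at h2
      obtain ⟨u, hu⟩ := (hQS i b).mp b.2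
      obtain ⟨w, hw⟩ := (hQS i b1).mp hb1
      obtain ⟨z, hz⟩ := h1
      rw [hu, hw, hz] at h2
      have hw0 : ¬ X ∣ w := by
        rintro ⟨w', rfl⟩
        exact hb1' ((hQS _ _).mpr ⟨w', by rw [hw]; ring⟩)
      have h3 : u * w ^ (q - 1) = X * z := by
        have h5 : (X ^ i) ^ q = (X : S⟦X⟧) ^ i * (X ^ i) ^ (q - 1) := by
          rw [← pow_succ', Nat.sub_add_cancel hqpos]
        rw [h5, mul_pow] at h2
        have h6 : (X : S⟦X⟧) ^ i * (X ^ i) ^ (q - 1) ≠ 0 :=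
          mul_ne_zero (pow_ne_zero _ X_ne_zero) (pow_ne_zero _ (pow_ne_zero _ X_ne_zero))
        apply mul_left_cancel₀ h6
        rw [← h2]; ring
      have h4 : X ∣ u := by
        rcases (X_prime (R := S)).dvd_or_dvd (Dvd.intro _ h3.symm) with h | h
        · exact h
        · exact absurd ((X_prime (R := S)).dvd_of_dvd_pow h) hw0
      rw [hQS, hu, pow_succ]
      exact mul_dvd_mul_left _ h4
    have hfg : (LinearMap.range T').FG := IsNoetherian.noetherian _
    obtain ⟨s, hs⟩ := fg_mod_ker T' hfg
    classical
    refine ⟨s.image (QS i).subtype, fun b hb => ?_⟩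
    obtain ⟨c, hc, hc'⟩ := hs ⟨b, hb⟩
    refine ⟨c, ?_, hker _ hc'⟩
    have := Submodule.mem_map_of_mem (f := (QS i).subtype) hc
    rwa [Submodule.map_span, ← Finset.coe_image] at this
  have hall : ∀ i, ∃ s : Finset B, ∀ b, ∃ c ∈ Submodule.span S (s : Set B), b - c ∈ QS i := by
    intro i
    induction i with
    | zero => exact ⟨∅, fun b => ⟨0, by simp, by simp [hQS]⟩⟩
    | succ i ih =>
      obtain ⟨s, hs⟩ := ih
      obtain ⟨s', hs'⟩ := hstep i
      classical
      refine ⟨s ∪ s', fun b => ?_⟩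
      obtain ⟨c, hc, hbc⟩ := hs b
      obtain ⟨c', hc', hbc'⟩ := hs' _ hbc
      refine ⟨c + c', Submodule.add_mem _ ?_ ?_, by rwa [← sub_sub]⟩
      · exact Submodule.span_mono (by simp) hc
      · exact Submodule.span_mono (by simp) hc'
  obtain ⟨s, hs⟩ := hall q
  let bb : Fin s.card → B := fun i => s.equivFin.symm i
  have hbb : Set.range bb = (s : Set B) := by
    ext y
    simp only [bb, Set.mem_range, Finset.mem_coe]
    exact ⟨fun ⟨i, hi⟩ => hi ▸ (s.equivFin.symm i).2, fun h => ⟨s.equivFin ⟨y, h⟩, by simp⟩⟩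
  have hmem : ∀ (i : ℕ) (b : B), (b ∈ (Ideal.span {(X : S⟦X⟧)} ^ i • ⊤ : Submodule S⟦X⟧ B)) ↔
      ∃ b', b = algebraMap S⟦X⟧ B (X ^ i) * b' := by
    intro i b
    rw [Ideal.span_singleton_pow, Ideal.smul_top_eq_map, Ideal.map_span, Set.image_singleton]
    exact Ideal.mem_span_singleton
  have hH : IsHausdorff (Ideal.span {(X : S⟦X⟧)}) B := by
    refine ⟨fun b hb => hφinj ?_⟩
    rw [map_zero]
    ext k
    obtain ⟨b', hb'⟩ := (hmem (k + 1) b).mp (by simpa [SModEq.zero] using hb (k + 1))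
    have h1 : X ^ (k + 1) ∣ φ b := by
      rw [hb', map_mul, hφalg]
      exact (dvd_pow_self _ hqpos.ne').mul_right _
    rw [X_pow_dvd_iff] at h1
    simpa using h1 k (Nat.lt_succ_self k)
  refine finite_of_quot (Ideal.span {(X : S⟦X⟧)}) bb fun b => ?_
  obtain ⟨c, hc, hbc⟩ := hs b
  rw [← hbb, Submodule.mem_span_range_iff_exists_fun] at hc
  obtain ⟨g, rfl⟩ := hc
  refine ⟨fun i => C (g i), ?_⟩
  have h1 : ∑ i, (C (g i) : S⟦X⟧) • bb i = ∑ i, g i • bb i := by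
    refine Finset.sum_congr rfl fun i _ => ?_
    rw [hsm, Algebra.smul_def]
  rw [h1]
  have := (hmem 1 (b - ∑ i, g i • bb i)).mpr (hex 1 _ (by rw [one_mul]; exact hbc))
  rwa [pow_one] at this

structure GoodRing (p d : ℕ) (S : Type) [CommRing S] : Prop where
  dom : IsDomain S
  noeth : IsNoetherianRing S
  ic : IsIntegrallyClosed S
  loc : IsLocalRing S
  dim : ringKrullDim S ≤ d
  ech : ExpChar S p
  n2 : N2pi p S

open PowerSeries in
lemma GoodRing.ps {p d : ℕ} {S : Type} [CommRing S] (h : GoodRing p d S) :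
    GoodRing p (d + 1) S⟦X⟧ := by
  obtain ⟨_, _, _, _, hd, _, hn⟩ := h
  have hloc : IsLocalRing S⟦X⟧ := inferInstance
  refine ⟨inferInstance, inferInstance, ps_integrallyClosed S, hloc, ?_,
    expChar_of_injective_ringHom (PowerSeries.C_injective (R := S)) p, N2pi_ps hn⟩
  have h1 := ringKrullDim_le_ringKrullDim_quotient_add_card ({X} : Finset S⟦X⟧) (by
    rw [IsLocalRing.ringJacobson_eq_maximalIdeal]
    simp [X_prime.not_unit])
  have h2 : ringKrullDim (S⟦X⟧ ⧸ Ideal.span (({X} : Finset S⟦X⟧) : Set S⟦X⟧)) ≤ ringKrullDim S := by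
    refine ringKrullDim_le_of_surjective ((Ideal.Quotient.mk _).comp C) ?_
    intro y
    obtain ⟨f, rfl⟩ := Ideal.Quotient.mk_surjective y
    refine ⟨constantCoeff f, ?_⟩
    symm
    rw [RingHom.comp_apply, Ideal.Quotient.eq, Finset.coe_singleton, Ideal.mem_span_singleton, X_dvd_iff]
    simp
  calc _ ≤ _ := h1
    _ ≤ (d : WithBot ℕ∞) + 1 := by
      simp only [Finset.card_singleton, Nat.cast_one]
      gcongr
      exact h2.trans hd
    _ = _ := by push_cast; rfl

lemma GoodRing.mvps {p d : ℕ} {S : Type} [CommRing S] (h : GoodRing p d S) (n : ℕ) :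
    ∃ (A : Type) (_ : CommRing A), GoodRing p (d + n) A ∧ Nonempty (A ≃+* MvPowerSeries (Fin n) S) := by
  induction n with
  | zero => exact ⟨S, inferInstance, h, ⟨(MvPowerSeries.isEmptyEquiv (σ := Fin 0) S).symm.toRingEquiv⟩⟩
  | succ n ih =>
    obtain ⟨A, _, hA, ⟨e⟩⟩ := ih
    refine ⟨PowerSeries A, inferInstance, hA.ps, ⟨?_⟩⟩
    refine RingEquiv.trans ?_ (MvPowerSeries.finSuccEquiv S n).symm.toRingEquiv
    refine RingEquiv.ofBijective (PowerSeries.map e.toRingHom) ⟨?_, ?_⟩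
    · exact PowerSeries.map_injective _ e.injective
    · exact PowerSeries.map_surjective _ e.surjective

lemma ringKrullDim_le_of_isIntegral {A D : Type} [CommRing A] [CommRing D] [Algebra A D]
    [Algebra.IsIntegral A D] : ringKrullDim D ≤ ringKrullDim A := by
  refine Order.krullDim_le_of_strictMono (PrimeSpectrum.comap (algebraMap A D)) ?_
  intro I J hIJ
  exact Ideal.IsIntegral.comap_lt_comap hIJ

/-- a finite map from a good ring of small dimension is injective -/
lemma GoodRing.injective {p d : ℕ} {A D : Type} [CommRing A] [CommRing D] (h : GoodRing p d A)
    (f : A →+* D) (hf : f.Finite) (hd : (d : WithBot ℕ∞) ≤ ringKrullDim D) : Function.Injective f := by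
  obtain ⟨_, _, _, _, hA, _, hn⟩ := h
  rw [injective_iff_map_eq_zero]
  by_contra! hcon
  obtain ⟨a, ha, ha0⟩ := hcon
  let g : A ⧸ Ideal.span {a} →+* D := Ideal.Quotient.lift _ f (by
    intro x hx
    obtain ⟨y, rfl⟩ := Ideal.mem_span_singleton.mp hx
    rw [map_mul, ha, zero_mul])
  have hg : g.Finite := by
    refine RingHom.Finite.of_comp_finite (f := Ideal.Quotient.mk (Ideal.span {a})) ?_
    convert hf
    ext x; simp [g]
  algebraize [g]
  have h1 : ringKrullDim D ≤ ringKrullDim (A ⧸ Ideal.span {a}) := ringKrullDim_le_of_isIntegral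
  have h2 := ringKrullDim_quotient_succ_le_of_nonZeroDivisor (mem_nonZeroDivisors_of_ne_zero ha0)
  have h3 : (d : WithBot ℕ∞) + 1 ≤ d := by
    calc _ ≤ ringKrullDim (A ⧸ Ideal.span {a}) + 1 := by gcongr; exact hd.trans h1
      _ ≤ _ := h2.trans hA
  have h4 : d + 1 ≤ d := by exact_mod_cast h3
  omega

lemma aux_fixedField_pi {K L : Type} [Field K] [Field L] [Algebra K L] [FiniteDimensional K L] [Normal K L] :
    IsPurelyInseparable K (IntermediateField.fixedField (⊤ : Subgroup (L ≃ₐ[K] L))) := by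
  classical
  rw [isPurelyInseparable_iff_natSepDegree_eq_one]
  intro x
  have hx : minpoly K x = minpoly K (x : L) :=
    (minpoly.algebraMap_eq (algebraMap (IntermediateField.fixedField (⊤ : Subgroup (L ≃ₐ[K] L))) L).injective x).symm
  rw [hx, Polynomial.natSepDegree_eq_of_splits _ (Normal.splits (inferInstance : Normal K L) (x : L)),
    Finset.card_eq_one]
  refine ⟨(x : L), ?_⟩
  have hint : IsIntegral K (x : L) := Algebra.IsIntegral.isIntegral _
  ext y
  rw [Multiset.mem_toFinset, Polynomial.mem_aroots, Finset.mem_singleton]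
  constructor
  · rintro ⟨_, hy⟩
    obtain ⟨σ, hσ⟩ := minpoly.exists_algEquiv_of_root' (hint.isAlgebraic) hy
    rw [← hσ]
    exact (IntermediateField.mem_fixedField_iff _ _).mp x.2 σ trivial
  · rintro rfl
    exact ⟨minpoly.ne_zero hint, minpoly.aeval _ _⟩

lemma aux_fixedField_sep {K L : Type} [Field K] [Field L] [Algebra K L] [FiniteDimensional K L] :
    Algebra.IsSeparable (IntermediateField.fixedField (⊤ : Subgroup (L ≃ₐ[K] L))) L := by
  have := IsGalois.of_fixed_field L (⊤ : Subgroup (L ≃ₐ[K] L))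
  exact this.1

lemma N2_normal {p : ℕ} {A : Type} [CommRing A] [IsDomain A] [IsNoetherianRing A] [IsIntegrallyClosed A]
    [ExpChar A p] (hA : N2pi p A) (K L : Type) [Field K] [Algebra A K] [IsFractionRing A K]
    [Field L] [Algebra A L] [Algebra K L] [IsScalarTower A K L]
    [FiniteDimensional K L] [Normal K L] : Module.Finite A (integralClosure A L) := by
  let E := IntermediateField.fixedField (⊤ : Subgroup (L ≃ₐ[K] L))
  have hpi : IsPurelyInseparable K E := aux_fixedField_pi
  have hsep : Algebra.IsSeparable E L := aux_fixedField_sep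
  have hAK : Function.Injective (algebraMap A K) := IsFractionRing.injective A K
  have : ExpChar K p := expChar_of_injective_ringHom hAK p
  have hAE : Function.Injective (algebraMap A E) := by
    rw [IsScalarTower.algebraMap_eq A K E]
    exact (algebraMap K E).injective.comp hAK
  have hfE : FaithfulSMul A E := (faithfulSMul_iff_algebraMap_injective A E).mpr hAE
  have h1 : Module.Finite A (integralClosure A E) := by
    apply hA E (IsPurelyInseparable.exponent K E)
    · intro y
      obtain ⟨z, hz⟩ := IsPurelyInseparable.exponent_def' K p y
      obtain ⟨a, b, hb, rfl⟩ := IsFractionRing.div_surjective (A := A) z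
      refine ⟨a, b, nonZeroDivisors.ne_zero hb, ?_⟩
      have hb0 : algebraMap A E b ≠ 0 := by
        rw [Ne, map_eq_zero_iff _ hAE]; exact nonZeroDivisors.ne_zero hb
      rw [← hz, map_div₀, ← IsScalarTower.algebraMap_apply, ← IsScalarTower.algebraMap_apply,
        mul_div_cancel₀ _ hb0]
    · refine ⟨Module.finrank K E + 1, fun v hv => ?_⟩
      have h2 : LinearIndependent K v := (LinearIndependent.iff_fractionRing A K).mp hv
      have := h2.fintype_card_le_finrank
      simp at this
  let A' := integralClosure A E
  have : IsFractionRing A' E := integralClosure.isFractionRing_of_finite_extension K E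
  have : IsIntegrallyClosed A' := integralClosure.isIntegrallyClosedOfFiniteExtension K
  have : IsNoetherianRing A' := IsNoetherianRing.of_finite A A'
  have h3 : Module.Finite A' (integralClosure A' L) :=
    IsIntegralClosure.finite A' E L (integralClosure A' L)
  have : IsScalarTower A A' L := IsScalarTower.of_algebraMap_eq' (by
    rw [IsScalarTower.algebraMap_eq A' E L, RingHom.comp_assoc, ← IsScalarTower.algebraMap_eq A A' E,
      IsScalarTower.algebraMap_eq A K L, IsScalarTower.algebraMap_eq K E L, RingHom.comp_assoc,
      ← IsScalarTower.algebraMap_eq A K E])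
  let _ : Algebra A (integralClosure A' L) :=
    ((algebraMap A' (integralClosure A' L)).comp (algebraMap A A')).toAlgebra
  have : IsScalarTower A A' (integralClosure A' L) := IsScalarTower.of_algebraMap_eq' rfl
  have h4 : Module.Finite A (integralClosure A' L) := Module.Finite.trans A' _
  let f : integralClosure A L →ₗ[A] integralClosure A' L :=
    { toFun := fun x => ⟨x.1, x.2.tower_top⟩
      map_add' := fun _ _ => rfl
      map_smul' := fun a x => Subtype.ext (by
        rw [RingHom.id_apply, Algebra.smul_def, Algebra.smul_def]; rfl) }
  exact Module.Finite.of_injective f (fun x y h => Subtype.ext (congrArg (fun z => z.1) h))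

lemma N2_general {p : ℕ} {A : Type} [CommRing A] [IsDomain A] [IsNoetherianRing A] [IsIntegrallyClosed A]
    [ExpChar A p] (hA : N2pi p A) (K L : Type) [Field K] [Algebra A K] [IsFractionRing A K]
    [Field L] [Algebra A L] [Algebra K L] [IsScalarTower A K L]
    [FiniteDimensional K L] : Module.Finite A (integralClosure A L) := by
  let L' := IntermediateField.normalClosure K L (AlgebraicClosure L)
  have : Normal K (AlgebraicClosure L) := by
    exact normal_iff.mpr fun x => ⟨(Algebra.IsAlgebraic.trans K L (AlgebraicClosure L)).isAlgebraic x |>.isIntegral,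
      IsAlgClosed.splits _⟩
  have : IsScalarTower A K L' := inferInstance
  have : IsScalarTower A L L' := IsScalarTower.of_algebraMap_eq' (by
    rw [IsScalarTower.algebraMap_eq A K L', IsScalarTower.algebraMap_eq A K L,
      IsScalarTower.algebraMap_eq K L L', RingHom.comp_assoc])
  have := N2_normal hA K L'
  let g : L →ₐ[A] L' := IsScalarTower.toAlgHom A L L'
  let f : integralClosure A L →ₗ[A] integralClosure A L' :=
    { toFun := fun x => ⟨g x.1, x.2.map g⟩
      map_add' := fun x y => Subtype.ext (map_add g x.1 y.1)
      map_smul' := fun a y => Subtype.ext (map_smul g a y.1) }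
  exact Module.Finite.of_injective f (fun x y h => Subtype.ext
    ((g : L →+* L').injective (congrArg (fun z => z.1) h)))

lemma N2_domain {p d : ℕ} {A D : Type} [CommRing A] (hA : GoodRing p d A) [CommRing D] [IsDomain D]
    (f : A →+* D) (hf : f.Finite) (hinj : Function.Injective f) :
    Module.Finite D (integralClosure D (FractionRing D)) := by
  obtain ⟨_, _, _, _, _, _, hn⟩ := hA
  let _ := f.toAlgebra
  have : Module.Finite A D := hf
  have : FaithfulSMul A D := (faithfulSMul_iff_algebraMap_injective A D).mpr hinj
  let K := FractionRing A
  let L := FractionRing D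
  have : FaithfulSMul A L := by
    rw [faithfulSMul_iff_algebraMap_injective, IsScalarTower.algebraMap_eq A D L]
    exact (IsFractionRing.injective D L).comp hinj
  let _ : Algebra K L := FractionRing.liftAlgebra A L
  have : IsScalarTower A K L := inferInstance
  have : FiniteDimensional K L := by
    have : IsLocalization (Algebra.algebraMapSubmonoid D (nonZeroDivisors A)) L := inferInstance
    exact Module.Finite.of_isLocalization A D (nonZeroDivisors A)
  have h := N2_general hn K L
  have h2 : Module.Finite A (integralClosure D L) := by
    let f : integralClosure D L →ₗ[A] integralClosure A L :=
      { toFun := fun x => ⟨x.1, isIntegral_trans x.1 x.2⟩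
        map_add' := fun _ _ => rfl
        map_smul' := fun _ _ => rfl }
    exact Module.Finite.of_injective f (fun x y h => Subtype.ext (congrArg (fun z => z.1) h))
  exact Module.Finite.of_restrictScalars_finite A D _

lemma GoodRing.field {p : ℕ} (k : Type) [Field k] [ExpChar k p] : GoodRing p 0 k := by
  refine ⟨inferInstance, inferInstance, inferInstance, inferInstance, ?_, inferInstance, ?_⟩
  · exact (ringKrullDim_eq_zero_of_field k).le
  · intro L _ _ _ e _ ⟨d, hd⟩
    have : Module.Finite k L := by
      by_contra hcon
      have h1 : (d : Cardinal) ≤ Module.rank k L := by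
        refine le_of_lt (lt_of_lt_of_le (Cardinal.natCast_lt_aleph0) ?_)
        rw [← not_lt, Module.rank_lt_aleph0_iff]
        exact hcon
      obtain ⟨v, hv⟩ := exists_linearIndependent_of_le_rank h1
      exact hd v hv
    exact Module.Finite.of_injective (integralClosure k L).val.toLinearMap Subtype.val_injective

lemma GoodRing.dvr (C : Type) [CommRing C] [IsDomain C] [IsDiscreteValuationRing C] [CharZero C] :
    GoodRing 1 1 C := by
  refine ⟨inferInstance, inferInstance, inferInstance, inferInstance, ?_, inferInstance, ?_⟩
  · exact_mod_cast Ring.krullDimLE_iff.mp (inferInstance : Ring.KrullDimLE 1 C)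
  · intro L _ _ _ e h _
    refine Module.Finite.of_surjective (Algebra.linearMap C (integralClosure C L)) ?_
    rintro ⟨y, hy⟩
    obtain ⟨a, b, hb, hab⟩ := h y
    rw [one_pow, pow_one] at hab
    obtain ⟨c, hc⟩ := mem_range_of_integral hy hb hab
    exact ⟨c, Subtype.ext hc⟩

lemma exists_section_zmod {p : ℕ} [Fact p.Prime] {Q k : Type} [CommRing Q] [Field k]
    (g : Q →+* k) (hg : Function.Surjective g) (hp : (p : Q) = 0)
    (hn : IsNilpotent (RingHom.ker g)) : ∃ s : k →+* Q, ∀ x, g (s x) = x := by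
  have : Nontrivial Q := g.domain_nontrivial
  have : CharP Q p := (CharP.charP_iff_prime_eq_zero Fact.out).mpr hp
  have : CharP k p := (CharP.charP_iff_prime_eq_zero Fact.out).mpr (by
    rw [← map_natCast g, hp, map_zero])
  let _ : Algebra (ZMod p) Q := ZMod.algebra Q p
  let _ : Algebra (ZMod p) k := ZMod.algebra k p
  let g' : Q →ₐ[ZMod p] k :=
    { g with commutes' := fun r => RingHom.congr_fun (RingHom.ext_zmod (g.comp (algebraMap (ZMod p) Q)) _) r }
  have : Algebra.FormallySmooth (ZMod p) k := formallySmooth_of_perfect (ZMod p) k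
  let s := Algebra.FormallySmooth.liftOfSurjective (AlgHom.id (ZMod p) k) g' hg hn
  exact ⟨s, fun x => Algebra.FormallySmooth.liftOfSurjective_apply (AlgHom.id (ZMod p) k) g' hg hn x⟩

structure CohenInv {D k : Type} [CommRing D] [Field k] (p : ℕ) (ρ : D →+* k) (j : ℕ) (F : Subring D) : Prop where
  h1 : ∀ d : D, (p : D) ^ (j + 1) * d ∈ F
  h2 : ∀ x ∈ F, ρ x = 0 → ∃ y, x = p * y
  h3 : ∀ t, ∃ x ∈ F, ρ x = t
  h4 : ∀ a : D, (p : D) * a ∈ F → ∃ f ∈ F, ∃ d, a = f + p ^ j * d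

lemma CohenInv.step {D k : Type} [CommRing D] [IsDomain D] [Field k] {p : ℕ} [Fact p.Prime] (hp0 : (p : D) ≠ 0)
    {ρ : D →+* k} (hρ : ρ p = 0) {j : ℕ} {F : Subring D} (h : CohenInv p ρ j F) :
    ∃ F' : Subring D, CohenInv p ρ (j + 1) F' ∧ F' ≤ F ∧ (∀ a : D, (p : D) * a ∈ F' → a ∈ F) ∧
      ∀ f ∈ F, ∃ f' ∈ F', ∃ d, f = f' + p ^ (j + 1) * d := by
  obtain ⟨h1, h2, h3, h4⟩ := h
  let I : Ideal F := Ideal.span {(p : F)} ⊔ (Ideal.span {(p : D) ^ (j + 2)}).comap F.subtype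
  have hI : ∀ x : F, x ∈ I ↔ ∃ f ∈ F, ∃ d, (x : D) = p * f + p ^ (j + 2) * d := by
    intro x
    constructor
    · intro hx
      obtain ⟨y, hy, z, hz, rfl⟩ := Submodule.mem_sup.mp hx
      obtain ⟨f, rfl⟩ := Ideal.mem_span_singleton'.mp hy
      obtain ⟨d, hd⟩ := Ideal.mem_span_singleton'.mp (Ideal.mem_comap.mp hz)
      refine ⟨f, f.2, d, ?_⟩
      have : (z : D) = d * p ^ (j + 2) := hd.symm
      push_cast
      rw [this]; ring
    · rintro ⟨f, hf, d, hx⟩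
      have hd : (p : D) ^ (j + 2) * d ∈ F := by
        have := h1 (p * d); convert this using 1; ring
      have : x = ⟨f, hf⟩ * (p : F) + ⟨_, hd⟩ := by
        apply Subtype.ext; push_cast; rw [hx]; ring
      rw [this]
      refine Submodule.add_mem_sup (Ideal.mem_span_singleton'.mpr ⟨_, rfl⟩) ?_
      exact Ideal.mem_comap.mpr (Ideal.mem_span_singleton.mpr ⟨d, rfl⟩)
  let g : F ⧸ I →+* k := Ideal.Quotient.lift I (ρ.comp F.subtype) (by
    intro x hx
    obtain ⟨f, hf, d, hx⟩ := (hI x).mp hx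
    change ρ (x : D) = 0
    rw [hx]; simp [hρ])
  have hg : ∀ x : F, g (Ideal.Quotient.mk I x) = ρ x := fun x => rfl
  have hgs : Function.Surjective g := by
    intro t
    obtain ⟨x, hx, rfl⟩ := h3 t
    exact ⟨Ideal.Quotient.mk I ⟨x, hx⟩, rfl⟩
  have hpQ : ((p : ℕ) : F ⧸ I) = 0 := by
    rw [← map_natCast (Ideal.Quotient.mk I), Ideal.Quotient.eq_zero_iff_mem]
    exact Ideal.mem_sup_left (Ideal.mem_span_singleton_self _)
  have hker : ∀ x : F, ρ x = 0 → ∃ f ∈ F, ∃ d, (x : D) = p * f + p ^ (j + 1) * d := by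
    intro x hx
    obtain ⟨y, hy⟩ := h2 x x.2 hx
    obtain ⟨f, hf, d, hd⟩ := h4 y (hy ▸ x.2)
    exact ⟨f, hf, d, by rw [hy, hd]; ring⟩
  have hnil : IsNilpotent (RingHom.ker g) := by
    refine ⟨2, ?_⟩
    rw [Ideal.zero_eq_bot, eq_bot_iff]
    refine (pow_two (RingHom.ker g)).le.trans ?_
    rw [Ideal.mul_le]
    intro a ha b hb
    obtain ⟨a, rfl⟩ := Ideal.Quotient.mk_surjective a
    obtain ⟨b, rfl⟩ := Ideal.Quotient.mk_surjective b
    rw [RingHom.mem_ker, hg] at ha hb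
    obtain ⟨f, hf, d, hfd⟩ := hker a ha
    obtain ⟨f', hf', d', hfd'⟩ := hker b hb
    rw [← map_mul, Ideal.mem_bot, Ideal.Quotient.eq_zero_iff_mem, hI]
    refine ⟨f * (b : D), F.mul_mem hf b.2, d * f' + p ^ j * (d * d'), ?_⟩
    push_cast
    rw [hfd, hfd']
    ring
  obtain ⟨s, hs⟩ := exists_section_zmod g hgs hpQ hnil
  let H : Subring D := (s.range.comap (Ideal.Quotient.mk I)).map F.subtype
  have hH : ∀ x, x ∈ H ↔ ∃ hx : x ∈ F, ∃ t, s t = Ideal.Quotient.mk I ⟨x, hx⟩ := by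
    intro x
    constructor
    · rintro ⟨⟨y, hy⟩, ⟨t, ht⟩, rfl⟩
      exact ⟨hy, t, ht⟩
    · rintro ⟨hx, t, ht⟩
      exact ⟨⟨x, hx⟩, ⟨t, ht⟩, rfl⟩
  have hHI : ∀ f ∈ F, ∀ d, p * f + p ^ (j + 2) * d ∈ H := by
    intro f hf d
    have hd : (p : D) ^ (j + 2) * d ∈ F := by
      have := h1 (p * d); convert this using 1; ring
    have hm : p * f + p ^ (j + 2) * d ∈ F := F.add_mem (F.mul_mem (natCast_mem F p) hf) hd
    refine (hH _).mpr ⟨hm, 0, ?_⟩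
    rw [map_zero, eq_comm, Ideal.Quotient.eq_zero_iff_mem, hI]
    exact ⟨f, hf, d, rfl⟩
  have hH0 : ∀ x ∈ H, ρ x = 0 → ∃ f ∈ F, ∃ d, x = p * f + p ^ (j + 2) * d := by
    intro x hx hx0
    obtain ⟨hxF, t, ht⟩ := (hH x).mp hx
    have : t = 0 := by rw [← hs t, ht, hg, hx0]
    rw [this, map_zero, eq_comm, Ideal.Quotient.eq_zero_iff_mem, hI] at ht
    exact ht
  have hHs : ∀ t, ∃ x ∈ H, ρ x = t := by
    intro t
    obtain ⟨x, hx⟩ := Ideal.Quotient.mk_surjective (s t)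
    exact ⟨x, (hH x).mpr ⟨x.2, t, hx.symm⟩, by rw [← hg, hx, hs]⟩
  have hHF : H ≤ F := fun x hx => ((hH x).mp hx).1
  have hdiv : ∀ a : D, (p : D) * a ∈ H → a ∈ F := by
    intro a ha
    obtain ⟨f, hf, d, hd⟩ := hH0 _ ha (by rw [map_mul, hρ, zero_mul])
    have : a = f + p ^ (j + 1) * d := mul_left_cancel₀ hp0 (by rw [hd]; ring)
    rw [this]
    exact F.add_mem hf (h1 d)
  have happ : ∀ f ∈ F, ∃ f' ∈ H, ∃ d, f = f' + p ^ (j + 1) * d := by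
    intro f hf
    obtain ⟨x, hx, hxf⟩ := hHs (ρ f)
    obtain ⟨u, hu, d, hd⟩ := hker ⟨f - x, F.sub_mem hf (hHF hx)⟩ (by simp [hxf])
    refine ⟨x + p * u, H.add_mem hx ?_, d, ?_⟩
    · simpa using hHI u hu 0
    · have hd' : f - x = p * u + p ^ (j + 1) * d := hd
      rw [add_assoc, ← hd']; ring
  refine ⟨H, ⟨?_, ?_, hHs, ?_⟩, hHF, hdiv, happ⟩
  · intro d
    have := hHI 0 F.zero_mem d
    simpa using this
  · intro x hx hx0
    exact h2 x (hHF hx) hx0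
  · intro a ha
    exact happ a (hdiv a ha)

lemma smodEq_span_iff {A : Type} [CommRing A] (p : A) (n : ℕ) (x y : A) :
    x ≡ y [SMOD ((Ideal.span {p}) ^ n • ⊤ : Submodule A A)] ↔ p ^ n ∣ x - y := by
  rw [SModEq.sub_mem, Ideal.span_singleton_pow, smul_eq_mul, Ideal.mul_top, Ideal.mem_span_singleton]

lemma adicComplete_span_limit {A : Type} [CommRing A] (p : A) [IsAdicComplete (Ideal.span {p}) A]
    (f : ℕ → A) (hf : ∀ n, p ^ n ∣ f n - f (n + 1)) : ∃ L, ∀ n, p ^ n ∣ f n - L := by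
  have h := (isPrecomplete_iff.mp (IsAdicComplete.toIsPrecomplete (I := Ideal.span {p}) (M := A))) f ?_
  · obtain ⟨L, hL⟩ := h
    exact ⟨L, fun n => (smodEq_span_iff _ _ _ _).mp (hL n)⟩
  · intro m n hmn
    rw [smodEq_span_iff]
    induction n, hmn using Nat.le_induction with
    | base => simp
    | succ n hmn ih =>
      have : f m - f (n + 1) = (f m - f n) + (f n - f (n + 1)) := by ring
      rw [this]
      exact dvd_add ih ((pow_dvd_pow p hmn).trans (hf n))

lemma adicComplete_span_of {A : Type} [CommRing A] (p : A) (h1 : ∀ x : A, (∀ n, p ^ n ∣ x) → x = 0)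
    (h2 : ∀ f : ℕ → A, (∀ n, p ^ n ∣ f n - f (n + 1)) → ∃ L, ∀ n, p ^ n ∣ f n - L) :
    IsAdicComplete (Ideal.span {p}) A := by
  have a1 : IsHausdorff (Ideal.span {p}) A := ⟨fun x hx => h1 x fun n => by
    simpa using (smodEq_span_iff _ _ _ _).mp (hx n)⟩
  have a2 : IsPrecomplete (Ideal.span {p}) A := ⟨fun f hf => by
    obtain ⟨L, hL⟩ := h2 f (fun n => (smodEq_span_iff _ _ _ _).mp (hf (Nat.le_succ n)))
    exact ⟨L, fun n => (smodEq_span_iff _ _ _ _).mpr (hL n)⟩⟩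
  exact { }

lemma exists_cohen_subring {D k : Type} [CommRing D] [IsDomain D] [Field k] {p : ℕ} [Fact p.Prime]
    (hp0 : (p : D) ≠ 0) [IsAdicComplete (Ideal.span {(p : D)}) D]
    {ρ : D →+* k} (hρ : ρ p = 0) (F : Subring D) (hF : CohenInv p ρ 0 F) :
    ∃ C : Subring D, (∀ t, ∃ x ∈ C, ρ x = t) ∧ (∀ a : D, (p : D) * a ∈ C → a ∈ C) ∧
      (∀ x ∈ C, ρ x = 0 → ∃ y, x = p * y) ∧
      (∀ x, (∀ n : ℕ, ∃ c ∈ C, (p : D) ^ n ∣ x - c) → x ∈ C) := by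
  choose st hst using fun (j : ℕ) (F : {F : Subring D // CohenInv p ρ j F}) => CohenInv.step hp0 hρ F.2
  let G : (j : ℕ) → {F : Subring D // CohenInv p ρ j F} := fun j =>
    Nat.rec ⟨F, hF⟩ (fun j F => ⟨st j F, (hst j F).1⟩) j
  have hG : ∀ j, (G (j + 1)).1 ≤ (G j).1 ∧ (∀ a : D, (p : D) * a ∈ (G (j + 1)).1 → a ∈ (G j).1) ∧
      ∀ f ∈ (G j).1, ∃ f' ∈ (G (j + 1)).1, ∃ d, f = f' + p ^ (j + 1) * d := fun j => (hst j (G j)).2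
  have hmem : ∀ x j n, x ∈ (G j).1 → j ≤ n → ∀ y, (p : D) ^ (j + 1) ∣ x - y → y ∈ (G j).1 := by
    rintro x j n hx - y ⟨d, hd⟩
    have : y = x - p ^ (j + 1) * d := by rw [← hd]; ring
    rw [this]
    exact Subring.sub_mem _ hx ((G j).2.h1 d)
  have hanti : ∀ i j, i ≤ j → (G j).1 ≤ (G i).1 := by
    intro i j hij
    induction j, hij using Nat.le_induction with
    | base => exact le_rfl
    | succ n _ ih => exact (hG n).1.trans ih
  refine ⟨⨅ j, (G j).1, ?_, ?_, ?_, ?_⟩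
  · intro t
    obtain ⟨x, hx, rfl⟩ := hF.h3 t
    choose nx hnx hnx' using fun j (f : {f : D // f ∈ (G j).1}) => (hG j).2.2 f.1 f.2
    let c : (j : ℕ) → {f : D // f ∈ (G j).1} := fun j =>
      Nat.rec ⟨x, hx⟩ (fun j f => ⟨nx j f, hnx j f⟩) j
    have hc : ∀ j, (p : D) ^ (j + 1) ∣ (c j).1 - (c (j + 1)).1 := by
      intro j
      obtain ⟨d, hd⟩ := hnx' j (c j)
      refine ⟨d, ?_⟩
      change (c j).1 - nx j (c j) = _
      rw [sub_eq_iff_eq_add, add_comm]; exact hd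
    let f : ℕ → D := fun n => (c (n - 1)).1
    obtain ⟨L, hL⟩ := adicComplete_span_limit (p : D) f (by
      intro n
      cases n with
      | zero => simp
      | succ n => exact hc n)
    refine ⟨L, ?_, ?_⟩
    · rw [Subring.mem_iInf]
      intro j
      exact hmem _ j j (c j).2 le_rfl L (hL (j + 1))
    · obtain ⟨d, hd⟩ := hL 1
      have hd' : x - L = (p : D) ^ 1 * d := hd
      have : L = x - p * d := by rw [← pow_one (p : D), ← hd']; ring
      rw [this, map_sub, map_mul, hρ]; simp
  · intro a ha
    rw [Subring.mem_iInf] at ha ⊢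
    exact fun j => (hG j).2.1 a (ha (j + 1))
  · intro x hx
    exact hF.h2 x ((Subring.mem_iInf.mp hx) 0)
  · intro x hx
    rw [Subring.mem_iInf]
    intro j
    obtain ⟨c, hc, hcx⟩ := hx (j + 1)
    exact hmem c j j ((Subring.mem_iInf.mp hc) j) le_rfl x (by rwa [dvd_sub_comm] at hcx)

lemma cohen_dvr {D k : Type} [CommRing D] [IsDomain D] [Field k] {p : ℕ} [Fact p.Prime]
    (hp0 : (p : D) ≠ 0) [IsAdicComplete (Ideal.span {(p : D)}) D]
    {ρ : D →+* k} (hρ : ρ p = 0) (C : Subring D) (h1 : ∀ t, ∃ x ∈ C, ρ x = t)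
    (h2 : ∀ a : D, (p : D) * a ∈ C → a ∈ C) (h3 : ∀ x ∈ C, ρ x = 0 → ∃ y, x = p * y)
    (h4 : ∀ x, (∀ n : ℕ, ∃ c ∈ C, (p : D) ^ n ∣ x - c) → x ∈ C) :
    IsAdicComplete (Ideal.span {(p : C)}) C ∧ IsDiscreteValuationRing C := by
  have h2' : ∀ n (a : D), (p : D) ^ n * a ∈ C → a ∈ C := by
    intro n
    induction n with
    | zero => intro a ha; simpa using ha
    | succ n ih =>
      intro a ha
      rw [pow_succ, mul_assoc] at ha
      exact h2 a (ih _ ha)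
  have hdvd : ∀ n (x : C), (p : D) ^ n ∣ (x : D) → (p : C) ^ n ∣ x := by
    rintro n x ⟨d, hd⟩
    exact ⟨⟨d, h2' n d (hd ▸ x.2)⟩, Subtype.ext (by push_cast; exact hd)⟩
  have hdvd' : ∀ n (x : C), (p : C) ^ n ∣ x → (p : D) ^ n ∣ (x : D) := by
    rintro n x ⟨d, rfl⟩
    exact ⟨d, by push_cast; rfl⟩
  have hhaus : ∀ x : D, (∀ n : ℕ, (p : D) ^ n ∣ x) → x = 0 := by
    intro x hx
    refine IsHausdorff.haus (I := Ideal.span {(p : D)}) inferInstance x fun n => ?_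
    rw [smodEq_span_iff]; simpa using hx n
  have hC : IsAdicComplete (Ideal.span {(p : C)}) C := by
    apply adicComplete_span_of
    · intro x hx
      exact Subtype.ext (hhaus x fun n => hdvd' n x (hx n))
    · intro f hf
      obtain ⟨L, hL⟩ := adicComplete_span_limit (p : D) (fun n => (f n : D)) (fun n => by
        simpa using hdvd' n _ (hf n))
      refine ⟨⟨L, h4 L fun n => ⟨f n, (f n).2, by rw [dvd_sub_comm]; exact hL n⟩⟩, fun n => hdvd n _ ?_⟩
      simpa using hL n
  refine ⟨hC, ?_⟩
  have hunit : ∀ x : C, ρ x ≠ 0 → IsUnit x := by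
    intro x hx
    obtain ⟨c, hc, hcx⟩ := h1 (ρ x)⁻¹
    obtain ⟨y, hy⟩ := h3 (1 - x * c) (C.sub_mem C.one_mem (C.mul_mem x.2 hc)) (by
      rw [map_sub, map_mul, map_one, hcx, mul_inv_cancel₀ hx, sub_self])
    have hyC : y ∈ C := h2 y (hy ▸ C.sub_mem C.one_mem (C.mul_mem x.2 hc))
    have hj : (p : C) ∈ (⊥ : Ideal C).jacobson :=
      IsAdicComplete.le_jacobson_bot (Ideal.span {(p : C)}) (Ideal.mem_span_singleton_self _)
    have h5 := (Ideal.mem_jacobson_bot.mp hj) (-⟨y, hyC⟩)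
    have h6 : (p : C) * (-⟨y, hyC⟩) + 1 = x * ⟨c, hc⟩ := by
      apply Subtype.ext
      push_cast
      linear_combination hy
    rw [h6] at h5
    exact isUnit_of_mul_isUnit_left h5
  have hnu : ∀ x : C, IsUnit x → ρ x ≠ 0 := fun x hx => (hx.map (ρ.comp C.subtype)).ne_zero
  have hp : Irreducible (p : C) := by
    refine ⟨fun h => hnu _ h (by simpa using hρ), ?_⟩
    intro a b hab
    by_contra! hcon
    obtain ⟨y, hy⟩ := h3 a a.2 (by by_contra h; exact hcon.1 (hunit a h))
    obtain ⟨z, hz⟩ := h3 b b.2 (by by_contra h; exact hcon.2 (hunit b h))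
    have h7 : (p : D) = a * b := by
      have := congrArg (fun x : C => (x : D)) hab; simpa using this
    have h8 : (1 : D) = p * (y * z) := by
      apply mul_left_cancel₀ hp0
      rw [hy, hz] at h7
      linear_combination h7
    have := congrArg ρ h8
    rw [map_one, map_mul, hρ, zero_mul] at this
    exact one_ne_zero this
  refine IsDiscreteValuationRing.ofHasUnitMulPowIrreducibleFactorization ⟨(p : C), hp, ?_⟩
  intro x hx
  have hex : ∃ n, ¬ (p : D) ^ n ∣ (x : D) := by
    by_contra! hcon
    exact hx (Subtype.ext (hhaus x hcon))
  classical
  let n := Nat.find hex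
  have hn : ¬ (p : D) ^ n ∣ (x : D) := Nat.find_spec hex
  have hn0 : n ≠ 0 := by intro h; rw [h] at hn; simp at hn
  obtain ⟨m, hm⟩ := Nat.exists_eq_succ_of_ne_zero hn0
  have hm' : (p : D) ^ m ∣ (x : D) := by
    by_contra h
    have := Nat.find_min' hex h
    omega
  obtain ⟨y, hy⟩ := hdvd m x hm'
  refine ⟨m, ?_⟩
  have hyu : IsUnit y := by
    apply hunit
    intro h
    obtain ⟨z, hz⟩ := h3 y y.2 h
    apply hn
    refine ⟨z, ?_⟩
    rw [hy, hm]
    push_cast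
    rw [hz, pow_succ]; ring
  obtain ⟨u, hu⟩ := hyu
  exact ⟨u, by rw [hu, hy]⟩

lemma smodEq_pow_iff {A : Type} [CommRing A] (I : Ideal A) (n : ℕ) (x y : A) :
    x ≡ y [SMOD (I ^ n • ⊤ : Submodule A A)] ↔ x - y ∈ I ^ n := by
  rw [SModEq.sub_mem, smul_eq_mul, Ideal.mul_top]

lemma adicComplete_limit {A : Type} [CommRing A] (I : Ideal A) [IsAdicComplete I A]
    (f : ℕ → A) (hf : ∀ n, f n - f (n + 1) ∈ I ^ n) : ∃ L, ∀ n, f n - L ∈ I ^ n := by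
  have h := (isPrecomplete_iff.mp (IsAdicComplete.toIsPrecomplete (I := I) (M := A))) f ?_
  · obtain ⟨L, hL⟩ := h
    exact ⟨L, fun n => (smodEq_pow_iff _ _ _ _).mp (hL n)⟩
  · intro m n hmn
    rw [smodEq_pow_iff]
    induction n, hmn using Nat.le_induction with
    | base => simp
    | succ n hmn ih =>
      have : f m - f (n + 1) = (f m - f n) + (f n - f (n + 1)) := by ring
      rw [this]
      exact Ideal.add_mem _ ih (Ideal.pow_le_pow_right hmn (hf n))

lemma mem_of_forall_pow {D : Type} [CommRing D] [IsLocalRing D] [IsNoetherianRing D] (J : Ideal D) (x : D)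
    (h : ∀ N : ℕ, ∃ j ∈ J, x - j ∈ maximalIdeal D ^ N) : x ∈ J := by
  rw [← Ideal.Quotient.eq_zero_iff_mem]
  have : IsHausdorff (maximalIdeal D) (D ⧸ J) := inferInstance
  refine this.haus _ fun n => ?_
  rw [SModEq.zero]
  obtain ⟨j, hj, hx⟩ := h n
  have h1 : Ideal.Quotient.mk J x = (x - j) • (1 : D ⧸ J) := by
    rw [Algebra.smul_def, mul_one]
    change _ = Ideal.Quotient.mk J (x - j)
    rw [map_sub, Ideal.Quotient.eq_zero_iff_mem.mpr hj, sub_zero]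
  rw [h1]
  exact Submodule.smul_mem_smul hx trivial

lemma adicComplete_span_of_mem {D : Type} [CommRing D] [IsLocalRing D] [IsNoetherianRing D]
    [IsAdicComplete (maximalIdeal D) D] (p : D) (hp : p ∈ maximalIdeal D) : IsAdicComplete (Ideal.span {p}) D := by
  apply adicComplete_span_of
  · intro x hx
    have : IsHausdorff (maximalIdeal D) D := inferInstance
    refine this.haus _ fun n => ?_
    rw [smodEq_pow_iff, sub_zero]
    obtain ⟨d, rfl⟩ := hx n
    exact Ideal.mul_mem_right _ _ (Ideal.pow_mem_pow hp n)
  · intro f hf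
    obtain ⟨L, hL⟩ := adicComplete_limit (maximalIdeal D) f (fun n => by
      obtain ⟨d, hd⟩ := hf n
      rw [hd]
      exact Ideal.mul_mem_right _ _ (Ideal.pow_mem_pow hp n))
    refine ⟨L, fun n => ?_⟩
    rw [← Ideal.mem_span_singleton]
    apply mem_of_forall_pow
    intro N
    have key : ∀ M, n ≤ M → f n - f M ∈ Ideal.span {p ^ n} := by
      intro M hM
      induction M, hM using Nat.le_induction with
      | base => simp
      | succ M hM ih =>
        have : f n - f (M + 1) = (f n - f M) + (f M - f (M + 1)) := by ring
        rw [this]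
        refine Ideal.add_mem _ ih (Ideal.mem_span_singleton.mpr ((pow_dvd_pow p hM).trans (hf M)))
    refine ⟨f n - f (max n N), key _ (le_max_left _ _), ?_⟩
    have : f n - L - (f n - f (max n N)) = f (max n N) - L := by ring
    rw [this]
    exact Ideal.pow_le_pow_right (le_max_right n N) (hL _)

lemma adicComplete_of_surjective {B E : Type} [CommRing B] [IsLocalRing B] [IsNoetherianRing B]
    [IsAdicComplete (maximalIdeal B) B] [CommRing E] [IsLocalRing E] (f : B →+* E)
    (hf : Function.Surjective f) : IsAdicComplete (maximalIdeal E) E := by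
  have : IsNoetherianRing E := isNoetherianRing_of_surjective B E f hf
  have hmap : ∀ n, (maximalIdeal E) ^ n = ((maximalIdeal B) ^ n).map f := by
    intro n
    rw [Ideal.map_pow]
    congr 1
    exact (IsLocalRing.map_maximalIdeal_of_surjective f hf).symm
  have a1 : IsHausdorff (maximalIdeal E) E := inferInstance
  have a2 : IsPrecomplete (maximalIdeal E) E := ⟨fun g hg => by
    have hg' : ∀ n, ∃ e ∈ (maximalIdeal B) ^ n, f e = g (n + 1) - g n := by
      intro n
      have := (smodEq_pow_iff _ _ _ _).mp (hg (Nat.le_succ n))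
      rw [← Ideal.neg_mem_iff, neg_sub, hmap, Ideal.mem_map_iff_of_surjective f hf] at this
      exact this
    choose e he hfe using hg'
    obtain ⟨b0, hb0⟩ := hf (g 0)
    let b : ℕ → B := fun n => b0 + ∑ i ∈ Finset.range n, e i
    have hb : ∀ n, f (b n) = g n := by
      intro n
      induction n with
      | zero => simp [b, hb0]
      | succ n ih =>
        have : b (n + 1) = b n + e n := by simp [b, Finset.sum_range_succ, add_assoc]
        rw [this, map_add, ih, hfe]; ring
    obtain ⟨L, hL⟩ := adicComplete_limit (maximalIdeal B) b (fun n => by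
      have : b n - b (n + 1) = - e n := by simp [b, Finset.sum_range_succ]
      rw [this]; exact Ideal.neg_mem_iff _ |>.mpr (he n))
    refine ⟨f L, fun n => ?_⟩
    rw [smodEq_pow_iff, hmap, ← hb, ← map_sub]
    exact Ideal.mem_map_of_mem _ (hL n)⟩
  exact { }

lemma exists_section_complete {B : Type} [CommRing B] [IsLocalRing B] [IsAdicComplete (maximalIdeal B) B]
    (F : Type) [Field F] [PerfectField F] (i : F →+* B) :
    ∃ s : ResidueField B →+* B, ∀ x, residue B (s x) = x := by
  let _ := i.toAlgebra
  have : Algebra.FormallySmooth F (ResidueField B) := formallySmooth_of_perfect F (ResidueField B)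
  obtain ⟨g, hg⟩ := Algebra.FormallySmooth.exists_mkₐ_comp_eq_of_isAdicComplete (R := F)
    (A := ResidueField B) (S := B) (I := maximalIdeal B) (AlgHom.id F (ResidueField B))
  exact ⟨g, fun x => DFunLike.congr_fun hg x⟩

lemma finite_mod_pow {S D : Type} [CommRing S] [CommRing D] [IsLocalRing D] [IsNoetherianRing D]
    (σ : S →+* D) (hσ : ∀ y : D, ∃ s, y - σ s ∈ maximalIdeal D) (N : ℕ) :
    ∃ (n : ℕ) (b : Fin n → D), ∀ y : D, ∃ c : Fin n → S, y - ∑ i, σ (c i) * b i ∈ maximalIdeal D ^ N := by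
  let _ := σ.toAlgebra
  have key : ∃ P : Submodule S D, P.FG ∧ ∀ y, ∃ z ∈ P, y - z ∈ maximalIdeal D ^ N := by
    induction N with
    | zero => exact ⟨⊥, Submodule.fg_bot, fun y => ⟨0, zero_mem _, by simp⟩⟩
    | succ N ih =>
      obtain ⟨P, hP, h⟩ := ih
      obtain ⟨U, hU⟩ := (maximalIdeal D ^ N).fg_of_isNoetherianRing
      refine ⟨P ⊔ Submodule.span S (U : Set D), hP.sup ⟨U, rfl⟩, fun y => ?_⟩
      have h2 : ∀ w ∈ maximalIdeal D ^ N, ∃ z ∈ Submodule.span S (U : Set D), w - z ∈ maximalIdeal D ^ (N + 1) := by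
        intro w hw
        rw [← hU] at hw
        induction hw using Submodule.span_induction with
        | mem u hu => exact ⟨u, Submodule.subset_span hu, by simp⟩
        | zero => exact ⟨0, zero_mem _, by simp⟩
        | add u v _ _ hu hv =>
          obtain ⟨z, hz, hz'⟩ := hu
          obtain ⟨t, ht, ht'⟩ := hv
          exact ⟨z + t, add_mem hz ht, by rw [add_sub_add_comm]; exact Ideal.add_mem _ hz' ht'⟩
        | smul a u hmem hu =>
          obtain ⟨z, hz, hz'⟩ := hu
          obtain ⟨s, hs⟩ := hσ a
          refine ⟨s • z, Submodule.smul_mem _ _ hz, ?_⟩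
          have : a • u - s • z = σ s * (u - z) + (a - σ s) * u := by
            change a * u - σ s * z = _
            ring
          rw [this]
          refine Ideal.add_mem _ (Ideal.mul_mem_left _ _ hz') ?_
          rw [pow_succ']
          exact Ideal.mul_mem_mul hs (hU ▸ hmem)
      obtain ⟨z, hz, hz'⟩ := h y
      obtain ⟨t, ht, ht'⟩ := h2 _ hz'
      exact ⟨z + t, Submodule.add_mem_sup hz ht, by rwa [← sub_sub]⟩
  obtain ⟨P, hP, h⟩ := key
  obtain ⟨n, b, rfl⟩ := Submodule.fg_iff_exists_fin_generating_family.mp hP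
  refine ⟨n, b, fun y => ?_⟩
  obtain ⟨z, hz, hz'⟩ := h y
  obtain ⟨c, rfl⟩ := (Submodule.mem_span_range_iff_exists_fun S).mp hz
  exact ⟨c, by simpa [Algebra.smul_def, RingHom.algebraMap_toAlgebra] using hz'⟩

lemma exists_sop (D : Type) [CommRing D] [IsLocalRing D] [IsNoetherianRing D] :
    ∃ d : ℕ, ringKrullDim D = d ∧ ∃ x : Fin d → D, (∀ i, x i ∈ maximalIdeal D) ∧
      ∃ N, maximalIdeal D ^ N ≤ Ideal.span (Set.range x) := by
  obtain ⟨s, hs, hc⟩ := Ideal.exists_finset_card_eq_height_of_isNoetherianRing (maximalIdeal D)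
  refine ⟨s.card, ?_, fun i => (s.equivFin.symm i : D), ?_, ?_⟩
  · rw [← IsLocalRing.maximalIdeal_height_eq_ringKrullDim, ← hc]; rfl
  · intro i
    exact hs.1.2 (Ideal.subset_span (s.equivFin.symm i).2)
  · have hr : Set.range (fun i => (s.equivFin.symm i : D)) = s := by
      ext y
      constructor
      · rintro ⟨i, rfl⟩; exact (s.equivFin.symm i).2
      · intro hy; exact ⟨s.equivFin ⟨y, hy⟩, by simp⟩
    rw [hr]
    apply Ideal.exists_pow_le_of_le_radical_of_fg _ (maximalIdeal D).fg_of_isNoetherianRing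
    rw [Ideal.radical_eq_sInf]
    refine le_sInf ?_
    rintro J ⟨hJ, hJp⟩
    exact hs.2 ⟨hJp, hJ⟩ (IsLocalRing.le_maximalIdeal hJp.ne_top)

lemma N2_equichar {D : Type} [CommRing D] [IsLocalRing D] [IsNoetherianRing D] [IsDomain D]
    [IsAdicComplete (maximalIdeal D) D] (p : ℕ) [ExpChar (ResidueField D) p]
    (F : Type) [Field F] [PerfectField F] (i : F →+* D) :
    Module.Finite D (integralClosure D (FractionRing D)) := by
  obtain ⟨s, hs⟩ := exists_section_complete F i
  obtain ⟨d, hd, x, hx, N, hN⟩ := exists_sop D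
  obtain ⟨n, b, hb⟩ := finite_mod_pow s (fun y => ⟨residue D y, by
    rw [← residue_eq_zero_iff, map_sub, hs, sub_self]⟩) N
  obtain ⟨g, -, -, hg⟩ := exists_mvps_finite (maximalIdeal D) s x hx b
    (fun m => (hb m).imp fun c hc => hN hc)
  obtain ⟨A, _, hA, ⟨e⟩⟩ := (GoodRing.field (p := p) (ResidueField D)).mvps d
  have hf : (g.comp (e : A →+* _)).Finite :=
    RingHom.Finite.comp hg (RingHom.Finite.of_surjective _ e.surjective)
  refine N2_domain hA _ hf (hA.injective _ hf ?_)
  rw [hd]; simp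

lemma exists_cohen_mixed {D : Type} [CommRing D] [IsLocalRing D] [IsNoetherianRing D] [IsDomain D]
    [IsAdicComplete (maximalIdeal D) D] (p : ℕ) [Fact p.Prime] (hp0 : (p : D) ≠ 0)
    (hpm : (p : D) ∈ maximalIdeal D) :
    ∃ C : Subring D, (∀ y : D, ∃ c ∈ C, y - c ∈ maximalIdeal D) ∧
      IsAdicComplete (Ideal.span {(p : C)}) C ∧ IsDiscreteValuationRing C := by
  have : Nontrivial (D ⧸ Ideal.span {(p : D)}) := Ideal.Quotient.nontrivial_iff.mpr (fun h => by
    have h1 : Ideal.span {(p : D)} ≤ maximalIdeal D := by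
      rw [Ideal.span_le]; simpa using hpm
    rw [h, top_le_iff] at h1
    exact Ideal.IsPrime.ne_top' h1)
  let mk := Ideal.Quotient.mk (Ideal.span {(p : D)})
  have hmk : Function.Surjective mk := Ideal.Quotient.mk_surjective
  have : IsLocalRing (D ⧸ Ideal.span {(p : D)}) := IsLocalRing.of_surjective' mk hmk
  have := adicComplete_of_surjective mk hmk
  have hpE : mk (p : D) = 0 := Ideal.Quotient.eq_zero_iff_mem.mpr (Ideal.mem_span_singleton_self _)
  have : CharP (D ⧸ Ideal.span {(p : D)}) p := (CharP.charP_iff_prime_eq_zero Fact.out).mpr (by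
    simpa using hpE)
  obtain ⟨σ, hσ⟩ := exists_section_complete (B := D ⧸ Ideal.span {(p : D)}) (ZMod p) (ZMod.castHom (dvd_refl p) _)
  let ρ : D →+* ResidueField (D ⧸ Ideal.span {(p : D)}) := (residue _).comp mk
  have hρ : ρ p = 0 := by
    change residue _ (mk (p : D)) = 0
    rw [hpE, map_zero]
  have hF : CohenInv p ρ 0 (σ.range.comap mk) := by
    refine ⟨?_, ?_, ?_, ?_⟩
    · intro d
      refine ⟨0, ?_⟩
      rw [map_mul, map_pow, hpE]; simp
    · rintro x ⟨t, ht⟩ hx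
      change residue _ (mk x) = 0 at hx
      rw [← ht, hσ] at hx
      rw [hx, map_zero] at ht
      exact Ideal.mem_span_singleton.mp (Ideal.Quotient.eq_zero_iff_mem.mp ht.symm)
    · intro t
      obtain ⟨x, hx⟩ := hmk (σ t)
      refine ⟨x, ⟨t, hx.symm⟩, ?_⟩
      change residue _ (mk x) = t
      rw [hx, hσ]
    · intro a _
      exact ⟨0, zero_mem _, a, by simp⟩
  have := adicComplete_span_of_mem (p : D) hpm
  obtain ⟨C, h1, h2, h3, h4⟩ := exists_cohen_subring hp0 hρ _ hF
  refine ⟨C, fun y => ?_, cohen_dvr hp0 hρ C h1 h2 h3 h4⟩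
  obtain ⟨c, hc, h⟩ := h1 (ρ y)
  refine ⟨c, hc, ?_⟩
  have : residue _ (mk (y - c)) = 0 := by
    change ρ (y - c) = 0
    rw [map_sub, h, sub_self]
  rw [residue_eq_zero_iff] at this
  rw [mem_maximalIdeal] at this ⊢
  exact fun hu => this (hu.map mk)

lemma N2_mixed {D : Type} [CommRing D] [IsLocalRing D] [IsNoetherianRing D] [IsDomain D]
    [IsAdicComplete (maximalIdeal D) D] (p : ℕ) [Fact p.Prime] (hp0 : (p : D) ≠ 0)
    (hpm : (p : D) ∈ maximalIdeal D) :
    Module.Finite D (integralClosure D (FractionRing D)) := by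
  obtain ⟨C, hC, _, _⟩ := exists_cohen_mixed p hp0 hpm
  have hpc : CharZero D := by
    obtain ⟨q, hq⟩ := CharP.exists D
    rcases CharP.char_is_prime_or_zero D q with h | h
    · exfalso
      have hpq : Nat.Coprime p q := (Nat.coprime_primes Fact.out h).mpr (fun e => hp0 (by
        rw [e]; exact CharP.cast_eq_zero D q))
      obtain ⟨a, b, hab⟩ := Nat.isCoprime_iff_coprime.mpr hpq
      have h1 : ((a * p + b * q : ℤ) : D) = 1 := by rw [hab]; simp
      push_cast at h1
      rw [CharP.cast_eq_zero D q, mul_zero, add_zero] at h1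
      exact (Ideal.ne_top_iff_one _).mp (Ideal.IsPrime.ne_top' (I := maximalIdeal D)) (h1 ▸ Ideal.mul_mem_left _ _ hpm)
    · subst h; exact CharP.charP_to_charZero D
  have : CharZero C := ⟨fun m n h => Nat.cast_injective (R := D) (by exact_mod_cast congrArg Subtype.val h)⟩
  have hgood := GoodRing.dvr C
  have : Nontrivial (D ⧸ Ideal.span {(p : D)}) := Ideal.Quotient.nontrivial_iff.mpr (fun h => by
    have h1 : Ideal.span {(p : D)} ≤ maximalIdeal D := by
      rw [Ideal.span_le]; simpa using hpm
    rw [h, top_le_iff] at h1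
    exact Ideal.IsPrime.ne_top' h1)
  let mk := Ideal.Quotient.mk (Ideal.span {(p : D)})
  have hmk : Function.Surjective mk := Ideal.Quotient.mk_surjective
  have : IsLocalRing (D ⧸ Ideal.span {(p : D)}) := IsLocalRing.of_surjective' mk hmk
  obtain ⟨d, hd, x', hx', N, hN⟩ := exists_sop (D ⧸ Ideal.span {(p : D)})
  choose x hxx using fun i => hmk (x' i)
  have hdim := ringKrullDim_quotient_span_singleton_succ_eq_ringKrullDim_of_mem_nonZeroDivisors
    (mem_nonZeroDivisors_of_ne_zero hp0) hpm
  have hx : ∀ i, x i ∈ maximalIdeal D := by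
    intro i
    have := hx' i
    rw [mem_maximalIdeal] at this ⊢
    exact fun hu => this (hxx i ▸ hu.map mk)
  let J := Ideal.span (Set.range x)
  have hNJ : ∀ y ∈ maximalIdeal D ^ N, ∃ z, y - p * z ∈ J := by
    intro y hy
    have h1 : mk y ∈ J.map mk := by
      rw [Ideal.map_span, ← Set.range_comp]
      have : mk ∘ x = x' := funext hxx
      rw [this]
      apply hN
      rw [← IsLocalRing.map_maximalIdeal_of_surjective mk hmk, ← Ideal.map_pow]
      exact Ideal.mem_map_of_mem _ hy
    obtain ⟨j, hj, hjy⟩ := (Ideal.mem_map_iff_of_surjective mk hmk).mp h1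
    obtain ⟨z, hz⟩ := Ideal.mem_span_singleton.mp (Ideal.Quotient.eq.mp hjy.symm)
    exact ⟨z, by rw [← hz]; simpa using hj⟩
  obtain ⟨n, b, hb⟩ := finite_mod_pow C.subtype (fun y => by
    obtain ⟨c, hc, h⟩ := hC y
    exact ⟨⟨c, hc⟩, h⟩) N
  have hsm : ∀ (c : C) (u : D), c • (Ideal.Quotient.mk J u) = Ideal.Quotient.mk J (c.1 * u) := fun c u => rfl
  have hH : IsHausdorff (Ideal.span {(p : C)}) (D ⧸ J) := ⟨fun y hy => by
    obtain ⟨y, rfl⟩ := Ideal.Quotient.mk_surjective y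
    rw [Ideal.Quotient.eq_zero_iff_mem]
    apply mem_of_forall_pow
    intro n
    have := (hy n)
    rw [SModEq.zero] at this
    have h2 : ∀ w ∈ (Ideal.span {(p : C)} ^ n • (⊤ : Submodule C (D ⧸ J))), ∃ u : D, w = Ideal.Quotient.mk J (p ^ n * u) := by
      intro w hw
      induction hw using Submodule.smul_induction_on' with
      | smul r hr m hm =>
        obtain ⟨u, rfl⟩ := Ideal.Quotient.mk_surjective m
        rw [Ideal.span_singleton_pow] at hr
        obtain ⟨c, rfl⟩ := Ideal.mem_span_singleton.mp hr
        refine ⟨c * u, ?_⟩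
        rw [hsm]
        congr 1
        push_cast
        ring
      | add u hu v hv h1 h2 =>
        obtain ⟨a, rfl⟩ := h1
        obtain ⟨b, rfl⟩ := h2
        exact ⟨a + b, by rw [← map_add, mul_add]⟩
    obtain ⟨u, hu⟩ := h2 _ this
    refine ⟨y - p ^ n * u, Ideal.Quotient.eq.mp hu, ?_⟩
    rw [sub_sub_cancel]
    exact Ideal.mul_mem_right _ _ (Ideal.pow_mem_pow hpm n)⟩
  have hfin : Module.Finite C (D ⧸ J) := by
    refine finite_of_quot (Ideal.span {(p : C)}) (fun i => Ideal.Quotient.mk J (b i)) fun m => ?_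
    obtain ⟨y, rfl⟩ := Ideal.Quotient.mk_surjective m
    obtain ⟨c, hc⟩ := hb y
    obtain ⟨z, hz⟩ := hNJ _ hc
    refine ⟨c, ?_⟩
    have : Ideal.Quotient.mk J y - ∑ i, c i • Ideal.Quotient.mk J (b i) = (p : C) • Ideal.Quotient.mk J z := by
      simp only [hsm]
      rw [← map_sum, ← map_sub]
      exact Ideal.Quotient.eq.mpr (by simpa using hz)
    rw [this]
    exact Submodule.smul_mem_smul (Ideal.mem_span_singleton_self _) trivial
  obtain ⟨k, t, ht⟩ := Module.Finite.exists_fin (R := C) (M := D ⧸ J)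
  choose b' hb' using fun i => Ideal.Quotient.mk_surjective (I := J) (t i)
  obtain ⟨g, -, -, hg⟩ := exists_mvps_finite (maximalIdeal D) C.subtype x hx b' (fun y => by
    have : Ideal.Quotient.mk J y ∈ Submodule.span C (Set.range t) := by rw [ht]; trivial
    obtain ⟨c, hc⟩ := (Submodule.mem_span_range_iff_exists_fun C).mp this
    refine ⟨c, ?_⟩
    rw [← Ideal.Quotient.eq, ← hc, map_sum]
    refine Finset.sum_congr rfl fun i _ => ?_
    rw [← hb', hsm]; rfl)
  obtain ⟨A, _, hA, ⟨e⟩⟩ := hgood.mvps d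
  have hf : (g.comp (e : A →+* _)).Finite :=
    RingHom.Finite.comp hg (RingHom.Finite.of_surjective _ e.surjective)
  refine N2_domain hA _ hf (hA.injective _ hf ?_)
  rw [← hdim, hd, add_comm]; simp

lemma N2_complete {D : Type} [CommRing D] [IsLocalRing D] [IsNoetherianRing D] [IsDomain D]
    [IsAdicComplete (maximalIdeal D) D] :
    Module.Finite D (integralClosure D (FractionRing D)) := by
  obtain ⟨p, hp⟩ := CharP.exists (ResidueField D)
  rcases CharP.char_is_prime_or_zero (ResidueField D) p with h | h
  · have : Fact p.Prime := ⟨h⟩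
    by_cases h0 : (p : D) = 0
    · have : CharP D p := (CharP.charP_iff_prime_eq_zero h).mpr h0
      have : ExpChar (ResidueField D) p := ExpChar.prime h
      exact N2_equichar p (ZMod p) (ZMod.castHom (dvd_refl p) _)
    · refine N2_mixed p h0 ?_
      rw [← residue_eq_zero_iff, map_natCast]
      exact CharP.cast_eq_zero _ p
  · subst h
    have : CharZero (ResidueField D) := CharP.charP_to_charZero _
    have hu : ∀ I : Ideal D, I ≠ ⊤ → CharZero (D ⧸ I) := by
      intro I hI
      have hle := IsLocalRing.le_maximalIdeal hI
      refine ⟨fun m n h => Nat.cast_injective (R := ResidueField D) ?_⟩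
      have := congrArg (Ideal.Quotient.factor hle) h
      rw [map_natCast, map_natCast] at this
      exact this
    obtain ⟨_⟩ := (EqualCharZero.nonempty_algebraRat_iff D).mpr (fun I hI => hu I hI)
    exact N2_equichar 1 ℚ (algebraMap ℚ D)

lemma adicCompletion_noeth (R : Type) [CommRing R] [IsLocalRing R] [IsNoetherianRing R] :
    IsNoetherianRing (AdicCompletion (maximalIdeal R) R) := by
  obtain ⟨n, x, hx⟩ := Submodule.fg_iff_exists_fin_generating_family.mp
    (maximalIdeal R).fg_of_isNoetherianRing
  let f := algebraMap R (AdicCompletion (maximalIdeal R) R)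
  have hspan : Ideal.span (Set.range (fun i => f (x i))) = maximalIdeal (AdicCompletion (maximalIdeal R) R) := by
    have hx' : maximalIdeal R = Ideal.span (Set.range x) := hx.symm
    rw [AdicCompletion.maximalIdeal_eq_map]
    have h3 := congrArg (Ideal.map f) hx'
    rw [Ideal.map_span, ← Set.range_comp] at h3
    exact h3.symm
  obtain ⟨g, -, -, hg⟩ := exists_mvps_finite (maximalIdeal (AdicCompletion (maximalIdeal R) R)) f
    (fun i => f (x i)) (fun i => by rw [← hspan]; exact Ideal.subset_span ⟨i, rfl⟩) (k := 1) (fun _ => 1) (fun m => by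
      obtain ⟨r, hr⟩ := (AdicCompletion.residueField_map_bijective R).2 (residue _ m)
      obtain ⟨r, rfl⟩ := residue_surjective r
      refine ⟨fun _ => r, ?_⟩
      rw [hspan, ← residue_eq_zero_iff]
      rw [ResidueField.map_residue] at hr
      simp [f, hr])
  let _ := g.toAlgebra
  have : Module.Finite (MvPowerSeries (Fin n) R) (AdicCompletion (maximalIdeal R) R) := hg
  exact isNoetherian_of_isNoetherianRing_of_finite (MvPowerSeries (Fin n) R) _ |> fun h =>
    isNoetherian_of_tower (MvPowerSeries (Fin n) R) h

lemma descent {R B : Type} [CommRing R] [CommRing B] [Algebra R B]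
    [Module.FaithfullyFlat R B] [IsNoetherianRing B] [IsReduced B]
    (hN : ∀ (P : Ideal B) [P.IsPrime], Module.Finite (B ⧸ P) (integralClosure (B ⧸ P) (FractionRing (B ⧸ P)))) :
    Module.Finite R (integralClosure R (FractionRing R)) := by
  have hP : ∀ P : minimalPrimes B, P.1.IsPrime := fun P => P.2.1.1
  have hfinP : Finite (minimalPrimes B) := minimalPrimes.finite_of_isNoetherianRing B
  have hnzd : ∀ b ∈ nonZeroDivisors R, algebraMap R B b ∈ nonZeroDivisors B := by
    intro b hb
    have h2 := Module.Flat.isSMulRegular_of_nonZeroDivisors (M := B) hb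
    rw [mem_nonZeroDivisors_iff_right]
    intro z hz
    apply h2
    simp only [Algebra.smul_def, mul_zero]
    rw [mul_comm]; exact hz
  let ι : ∀ P : minimalPrimes B, R →+* FractionRing (B ⧸ P.1) := fun P =>
    (algebraMap (B ⧸ P.1) (FractionRing (B ⧸ P.1))).comp ((Ideal.Quotient.mk P.1).comp (algebraMap R B))
  have hι : ∀ P, ∀ b : nonZeroDivisors R, IsUnit (ι P b) := by
    intro P b
    rw [isUnit_iff_ne_zero]
    intro h
    have h0 : Ideal.Quotient.mk P.1 (algebraMap R B b) = 0 :=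
      (IsFractionRing.injective (B ⧸ P.1) (FractionRing (B ⧸ P.1))) (by rw [map_zero]; exact h)
    exact Set.disjoint_left.mp (Ideal.disjoint_nonZeroDivisors_of_mem_minimalPrimes P.2)
      (Ideal.Quotient.eq_zero_iff_mem.mp h0) (hnzd b b.2)
  let φ : ∀ P : minimalPrimes B, FractionRing R →+* FractionRing (B ⧸ P.1) := fun P =>
    IsLocalization.lift (M := nonZeroDivisors R) (hι P)
  have hφ : ∀ P r, φ P (algebraMap R _ r) = ι P r := fun P r => IsLocalization.lift_eq (hι P) r
  let Φ : integralClosure R (FractionRing R) → (∀ P : minimalPrimes B, integralClosure (B ⧸ P.1) (FractionRing (B ⧸ P.1))) :=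
    fun y P => ⟨φ P y.1, IsIntegral.map_of_comp_eq ((Ideal.Quotient.mk P.1).comp (algebraMap R B)) (φ P)
      (by ext r; exact (hφ P r).symm) y.2⟩
  have hnoe : ∀ P : minimalPrimes B, IsNoetherian B (integralClosure (B ⧸ P.1) (FractionRing (B ⧸ P.1))) := by
    intro P
    have := hN P.1
    have : Module.Finite B (integralClosure (B ⧸ P.1) (FractionRing (B ⧸ P.1))) :=
      Module.Finite.trans (B ⧸ P.1) _
    infer_instance
  have hfg : (Submodule.span B (Set.range Φ)).FG := IsNoetherian.noetherian _
  obtain ⟨s', hs', hss⟩ := (Submodule.fg_span_iff_fg_span_finset_subset _).mp hfg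
  classical
  have hs2 : ∀ z ∈ s', ∃ y, Φ y = z := fun z hz => hs' hz
  choose! pre hpre using hs2
  refine ⟨⟨s'.image pre, ?_⟩⟩
  rw [eq_top_iff]
  rintro y -
  have hy : Φ y ∈ Submodule.span B (s' : Set _) := by
    rw [← hss]; exact Submodule.subset_span ⟨y, rfl⟩
  obtain ⟨β, hβ⟩ := Submodule.mem_span_finset'.mp hy
  obtain ⟨b, hb⟩ := IsLocalization.exist_integer_multiples_of_finset (nonZeroDivisors R)
    (insert y.1 ((s'.image pre).image Subtype.val))
  obtain ⟨a, ha⟩ := hb y.1 (Finset.mem_insert_self _ _)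
  have hb' : ∀ z : s', ∃ a : R, algebraMap R (FractionRing R) a = (b : R) • (pre z.1).1 := fun z =>
    hb _ (Finset.mem_insert_of_mem (Finset.mem_image_of_mem _ (Finset.mem_image_of_mem _ z.2)))
  choose a' ha' using hb'
  have hkey : algebraMap R B a = ∑ z, β z * algebraMap R B (a' z) := by
    rw [← sub_eq_zero]
    have : algebraMap R B a - ∑ z, β z * algebraMap R B (a' z) ∈ (⊥ : Ideal B).radical := by
      rw [← Ideal.sInf_minimalPrimes, Submodule.mem_sInf]
      intro P hPm
      let P' : minimalPrimes B := ⟨P, hPm⟩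
      have := hP P'
      change _ ∈ P'.1
      rw [← Ideal.Quotient.eq_zero_iff_mem, map_sub, sub_eq_zero]
      apply IsFractionRing.injective (B ⧸ P'.1) (FractionRing (B ⧸ P'.1))
      have h1 : ι P' a = ι P' b * (Φ y P').1 := by
        rw [← hφ, ha, Algebra.smul_def, map_mul, hφ]
      have h2 : ∀ z : s', ι P' (a' z) = ι P' b * (z.1 P').1 := by
        intro z
        rw [← hφ, ha', Algebra.smul_def, map_mul, hφ]
        exact congrArg (fun w => ι P' b * (w P').1) (hpre z.1 z.2)
      have h3 : (Φ y P').1 = ∑ z, algebraMap _ (FractionRing (B ⧸ P'.1)) (Ideal.Quotient.mk P'.1 (β z)) * (z.1 P').1 := by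
        rw [← hβ, Finset.sum_apply]
        rw [AddSubmonoidClass.coe_finsetSum]
        refine Finset.sum_congr rfl fun z _ => ?_
        change β z • (z.1 P').1 = _
        rw [Algebra.smul_def]; rfl
      change ι P' a = _
      rw [h1, h3, map_sum, map_sum, Finset.mul_sum]
      refine Finset.sum_congr rfl fun z _ => ?_
      rw [map_mul, map_mul]
      change _ = _ * ι P' (a' z)
      rw [h2]; ring
    obtain ⟨n, hn⟩ := this
    exact IsReduced.eq_zero _ ⟨n, (Submodule.mem_bot B).mp hn⟩
  have hmem : a ∈ Ideal.span (Set.range a') := by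
    rw [← Ideal.comap_map_eq_self_of_faithfullyFlat (B := B) (Ideal.span (Set.range a')), Ideal.mem_comap, hkey]
    exact Ideal.sum_mem _ fun z _ => Ideal.mul_mem_left _ _ (Ideal.mem_map_of_mem _ (Ideal.subset_span ⟨z, rfl⟩))
  obtain ⟨c, hc⟩ := (Submodule.mem_span_range_iff_exists_fun R).mp hmem
  have hfinal : y = ∑ z, c z • pre z.1 := by
    apply Subtype.ext
    have hu : IsUnit (algebraMap R (FractionRing R) b) := IsLocalization.map_units _ b
    apply hu.mul_left_cancel
    rw [← Algebra.smul_def, ← ha, ← hc, map_sum, AddSubmonoidClass.coe_finsetSum, Finset.mul_sum]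
    refine Finset.sum_congr rfl fun z _ => ?_
    rw [smul_eq_mul, map_mul, ha']
    change _ = _ * (c z • (pre z.1).1)
    rw [Algebra.smul_def, Algebra.smul_def]; ring
  rw [hfinal]
  refine Submodule.sum_mem _ fun z _ => Submodule.smul_mem _ _ (Submodule.subset_span ?_)
  simp only [Finset.coe_image]
  exact ⟨z.1, z.2, rfl⟩

lemma finite_of_reduced (R : Type) [CommRing R] [IsLocalRing R] [IsNoetherianRing R]
    (h : IsReduced (AdicCompletion (maximalIdeal R) R)) :
    Module.Finite R (integralClosure R (FractionRing R)) := by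
  have := adicCompletion_noeth R
  have : Module.FaithfullyFlat R (AdicCompletion (maximalIdeal R) R) :=
    Module.FaithfullyFlat.of_flat_of_isLocalHom
  refine descent (B := AdicCompletion (maximalIdeal R) R) fun P _ => ?_
  have : IsLocalRing (AdicCompletion (maximalIdeal R) R ⧸ P) :=
    IsLocalRing.of_surjective' (Ideal.Quotient.mk P) Ideal.Quotient.mk_surjective
  have := adicComplete_of_surjective (Ideal.Quotient.mk P) Ideal.Quotient.mk_surjective
  exact N2_complete

lemma mem_conductor {R : Type} [CommRing R] (r : R) :
    r ∈ conductorIdeal R ↔ ∀ y : IntClosure R, ∃ s : R, algebraMap R (IntClosure R) s = r • y := by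
  rw [conductorIdeal, Module.mem_annihilator]
  constructor
  · intro h y
    have := h (Submodule.Quotient.mk y)
    rw [← Submodule.Quotient.mk_smul, Submodule.Quotient.mk_eq_zero] at this
    exact this
  · intro h z
    obtain ⟨y, rfl⟩ := Submodule.Quotient.mk_surjective _ z
    rw [← Submodule.Quotient.mk_smul, Submodule.Quotient.mk_eq_zero]
    exact h y

lemma conductor_nzd {R : Type} [CommRing R] (hfin : Module.Finite R (integralClosure R (FractionRing R))) :
    ∃ c ∈ conductorIdeal R, c ∈ nonZeroDivisors R := by
  classical
  obtain ⟨S, hS⟩ := hfin.fg_top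
  obtain ⟨b, hb⟩ := IsLocalization.exist_integer_multiples_of_finset (nonZeroDivisors R)
    (S.image Subtype.val)
  refine ⟨b, ?_, b.2⟩
  rw [mem_conductor]
  intro y
  have hy : y ∈ Submodule.span R (S : Set (integralClosure R (FractionRing R))) := by rw [hS]; trivial
  induction hy using Submodule.span_induction with
  | mem y hy =>
    obtain ⟨s, hs⟩ := hb y.1 (Finset.mem_image_of_mem _ hy)
    exact ⟨s, Subtype.ext hs⟩
  | zero => exact ⟨0, by simp⟩
  | add u v _ _ hu hv =>
    obtain ⟨s, hs⟩ := hu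
    obtain ⟨t, ht⟩ := hv
    exact ⟨s + t, by rw [map_add, hs, ht, smul_add]⟩
  | smul a u _ hu =>
    obtain ⟨s, hs⟩ := hu
    exact ⟨a * s, by rw [map_mul, hs, ← Algebra.smul_def, smul_comm]⟩

lemma conductor_final {R : Type} [CommRing R] [IsLocalRing R] [IsNoetherianRing R]
    (hfin : Module.Finite R (integralClosure R (FractionRing R))) (x : R) (hx : x ∈ maximalIdeal R)
    (hle : conductorIdeal R ≤ Ideal.span {x}) : False := by
  obtain ⟨c, hc, hcn⟩ := conductor_nzd hfin
  have hxn : x ∈ nonZeroDivisors R := by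
    obtain ⟨t, rfl⟩ := Ideal.mem_span_singleton.mp (hle hc)
    exact (mul_mem_nonZeroDivisors.mp hcn).1
  have hxu : IsUnit (algebraMap R (FractionRing R) x) :=
    IsLocalization.map_units (M := nonZeroDivisors R) _ ⟨x, hxn⟩
  have h1 : conductorIdeal R ≤ maximalIdeal R • conductorIdeal R := by
    intro r hr
    obtain ⟨t, rfl⟩ := Ideal.mem_span_singleton.mp (hle hr)
    refine Ideal.mul_mem_mul hx ?_
    rw [mem_conductor] at hr ⊢
    intro y
    obtain ⟨s, hs⟩ := hr y
    have hsc : s ∈ conductorIdeal R := by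
      rw [mem_conductor]
      intro z
      obtain ⟨w, hw⟩ := hr (y * z)
      exact ⟨w, by rw [hw, Algebra.smul_def s, hs, smul_mul_assoc]⟩
    obtain ⟨u, rfl⟩ := Ideal.mem_span_singleton.mp (hle hsc)
    refine ⟨u, Subtype.ext (hxu.mul_left_cancel ?_)⟩
    have h2 := congrArg Subtype.val hs
    rw [mul_smul, map_mul] at h2
    rw [← Algebra.smul_def x (t • y).1]
    exact h2
  have h2 := Submodule.eq_bot_of_le_smul_of_le_jacobson_bot (maximalIdeal R) (conductorIdeal R)
    (IsNoetherian.noetherian _) h1 (IsLocalRing.maximalIdeal_le_jacobson _)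
  rw [h2, Submodule.mem_bot] at hc
  exact nonZeroDivisors.ne_zero hcn hc

-- STATEMENT 17
theorem stmt17 (R : Type) [CommRing R] [IsLocalRing R] [IsNoetherianRing R]
    (hau : AnalyticallyUnramified R) :
    ∀ x ∈ maximalIdeal R, ¬ conductorIdeal R ≤ Ideal.span {x} :=
  fun x hx hle => conductor_final (finite_of_reduced R hau) x hx hle
end
end

section
/- Let (R, m) be a 2-dimensional analytically unramified Noetherian local ring satisfying Serre's condition (R1) (R_p is regular for every prime p of height ≤ 1) and with m · H^1_m(R) = 0 (e.g. R Buchsbaum). Then for every system of parameters x_1, x_2 of R, the conductor ideal is not contained in the parameter ideal: 𝔠 ⊄ (x_1, x_2)R. -/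
open CategoryTheory IsLocalRing

set_option synthInstance.maxHeartbeats 1000000
set_option maxHeartbeats 1000000

noncomputable section

namespace S18

theorem fact_of_principal {A : Type*} [CommRing A] [IsLocalRing A] [IsNoetherianRing A] (t : A)
    (ht : maximalIdeal A = Ideal.span {t}) (a : A) (ha : a ≠ 0) :
    ∃ (n : ℕ) (u : A), IsUnit u ∧ a = t ^ n * u := by
  have h1 : ∃ n : ℕ, a ∉ maximalIdeal A ^ n := by
    by_contra! h
    have := Ideal.iInf_pow_eq_bot_of_isLocalRing (maximalIdeal A) (Ideal.IsPrime.ne_top inferInstance)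
    exact ha (by
      have h2 : a ∈ ⨅ i : ℕ, maximalIdeal A ^ i := by simpa [Ideal.mem_iInf] using h
      rw [this] at h2
      simpa using h2)
  classical
  have h2 := Nat.find_spec h1
  have h3 : Nat.find h1 ≠ 0 := by
    intro h; rw [h] at h2; simp at h2
  obtain ⟨n, hn⟩ := Nat.exists_eq_succ_of_ne_zero h3
  have h4 : a ∈ maximalIdeal A ^ n := by
    by_contra h
    have := Nat.find_min' h1 h
    omega
  rw [hn] at h2
  rw [ht, Ideal.span_singleton_pow, Ideal.mem_span_singleton] at h2 h4
  obtain ⟨u, hu⟩ := h4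
  refine ⟨n, u, ?_, hu⟩
  by_contra hnu
  have : u ∈ maximalIdeal A := hnu
  rw [ht, Ideal.mem_span_singleton] at this
  obtain ⟨v, rfl⟩ := this
  exact h2 ⟨v, by rw [hu, pow_succ]; ring⟩

theorem isDomain_of_principal {A : Type*} [CommRing A] [IsLocalRing A] [IsNoetherianRing A] (t : A)
    (ht : maximalIdeal A = Ideal.span {t}) (hn : ¬ IsNilpotent t) : IsDomain A := by
  have : NoZeroDivisors A := by
    refine ⟨fun {a b} hab => ?_⟩
    by_contra! h
    obtain ⟨n, u, hu, rfl⟩ := fact_of_principal t ht a h.1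
    obtain ⟨k, v, hv, rfl⟩ := fact_of_principal t ht b h.2
    apply hn
    refine ⟨n + k, ?_⟩
    have : t ^ (n + k) * (u * v) = 0 := by rw [← hab]; ring
    exact ((hu.mul hv).mul_left_eq_zero).1 this
  exact NoZeroDivisors.to_isDomain A

theorem reduced_principal {A : Type*} [CommRing A] [IsLocalRing A] [IsNoetherianRing A]
    [IsReduced A] (t : A)
    (ht : maximalIdeal A = Ideal.span {t}) : ∃ _ : IsDomain A, IsIntegrallyClosed A := by
  by_cases h0 : t = 0
  · subst h0
    have hf : IsField A := by
      rw [IsLocalRing.isField_iff_maximalIdeal_eq, ht]; simp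
    let := hf.toField
    exact ⟨inferInstance, inferInstance⟩
  · have hd := isDomain_of_principal t ht (fun h => h0 h.eq_zero)
    refine ⟨hd, ?_⟩
    have hp : (maximalIdeal A).IsPrincipal := ⟨t, ht⟩
    have : IsPrincipalIdealRing A := by
      refine ⟨fun I => ?_⟩
      by_cases hI : I = ⊥
      · rw [hI]; infer_instance
      obtain ⟨n, hn⟩ := exists_maximalIdeal_pow_eq_of_principal A hp I hI
      rw [hn, ht, Ideal.span_singleton_pow]
      exact ⟨_, rfl⟩
    infer_instance

theorem span_prime {R : Type*} [CommRing R] [IsLocalRing R] [IsNoetherianRing R]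
    (hdim : ringKrullDim R = 2) (a b : R) (h : maximalIdeal R = Ideal.span {a, b}) :
    (Ideal.span {a}).IsPrime ∧ b ∉ Ideal.span {a} := by
  have ham : a ∈ maximalIdeal R := h ▸ Ideal.subset_span (by simp)
  have hne : Ideal.span {a} ≠ ⊤ := fun h' => by
    rw [Ideal.span_singleton_eq_top] at h'
    exact ham h'
  have key : b ∉ (Ideal.span {a}).radical := by
    intro hb
    have hle : maximalIdeal R ≤ (Ideal.span {a}).radical := by
      rw [h, Ideal.span_le]
      rintro x (rfl | rfl)
      · exact Ideal.le_radical (Ideal.mem_span_singleton_self _)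
      · exact hb
    have hmin : maximalIdeal R ∈ (Ideal.span {a}).minimalPrimes := by
      refine ⟨⟨inferInstance, (Ideal.span_singleton_le_iff_mem _).2 ham⟩, ?_⟩
      rintro J ⟨hJ, hJ'⟩ _
      exact hle.trans (hJ.radical_le_iff.2 hJ')
    have h1 := Ideal.height_le_one_of_isPrincipal_of_mem_minimalPrimes _ _ hmin
    have h2 := IsLocalRing.maximalIdeal_height_eq_ringKrullDim (R := R)
    rw [hdim] at h2
    have h3 : (maximalIdeal R).height = 2 := WithBot.coe_injective h2
    rw [h3] at h1
    exact absurd h1 (by decide)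
  refine ⟨?_, fun hb => key (Ideal.le_radical hb)⟩
  rw [← Ideal.Quotient.isDomain_iff_prime]
  have : Nontrivial (R ⧸ Ideal.span {a}) := Ideal.Quotient.nontrivial_iff.2 hne
  have : IsLocalRing (R ⧸ Ideal.span {a}) :=
    IsLocalRing.of_surjective' (Ideal.Quotient.mk _) Ideal.Quotient.mk_surjective
  refine isDomain_of_principal (Ideal.Quotient.mk _ b) ?_ ?_
  · have h1 : (maximalIdeal R).map (Ideal.Quotient.mk (Ideal.span {a})) =
        maximalIdeal (R ⧸ Ideal.span {a}) :=
      IsLocalRing.map_maximalIdeal_of_surjective _ Ideal.Quotient.mk_surjective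
    rw [← h1, h, Ideal.map_span, Set.image_pair]
    have : Ideal.Quotient.mk (Ideal.span {a}) a = 0 :=
      Ideal.Quotient.eq_zero_iff_mem.2 (Ideal.mem_span_singleton_self _)
    rw [this, Ideal.span_insert_zero]
  · rintro ⟨n, hn⟩
    rw [← map_pow, Ideal.Quotient.eq_zero_iff_mem] at hn
    exact key ⟨n, hn⟩

theorem domain_of_two {R : Type*} [CommRing R] [IsLocalRing R] [IsNoetherianRing R]
    (hdim : ringKrullDim R = 2) (a b : R) (h : maximalIdeal R = Ideal.span {a, b}) :
    IsDomain R := by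
  have hk : ∀ k : ℕ, maximalIdeal R = Ideal.span {a + b ^ (k + 1), b} := by
    intro k
    rw [h]
    apply le_antisymm <;> rw [Ideal.span_le] <;> rintro x (rfl | rfl)
    · exact Ideal.mem_span_pair.2 ⟨1, - b ^ k, by ring⟩
    · exact Ideal.subset_span (by simp)
    · exact Ideal.mem_span_pair.2 ⟨1, b ^ k, by ring⟩
    · exact Ideal.subset_span (by simp)
  have hbm : b ∈ maximalIdeal R := h ▸ Ideal.subset_span (by simp)
  have hfin : (minimalPrimes R).Finite := minimalPrimes.finite_of_isNoetherianRing R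
  have : ∃ k : ℕ, Ideal.span {a + b ^ (k + 1)} ∉ minimalPrimes R := by
    by_contra! hall
    have := hfin.to_subtype
    obtain ⟨k, l, hne, he⟩ := Finite.exists_ne_map_eq_of_infinite
      (fun k : ℕ => (⟨_, hall k⟩ : minimalPrimes R))
    simp only [Subtype.mk.injEq] at he
    wlog hlt : k < l generalizing k l
    · exact this l k hne.symm he.symm (by omega)
    have hp := (span_prime hdim _ _ (hk k))
    apply hp.2
    have h1 : a + b ^ (l + 1) ∈ Ideal.span {a + b ^ (k + 1)} := by
      rw [he]; exact Ideal.mem_span_singleton_self _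
    have h2 : b ^ (k + 1) * (1 - b ^ (l - k)) ∈ Ideal.span {a + b ^ (k + 1)} := by
      have := Ideal.sub_mem _ (Ideal.mem_span_singleton_self (a + b ^ (k + 1))) h1
      convert this using 1
      obtain ⟨c, rfl⟩ := Nat.exists_eq_add_of_lt hlt
      have : k + c + 1 - k = c + 1 := by omega
      rw [this]; ring
    have hu : IsUnit (1 - b ^ (l - k)) := by
      by_contra hnu
      have h3 : 1 - b ^ (l - k) ∈ maximalIdeal R := hnu
      have h4 : b ^ (l - k) ∈ maximalIdeal R := Ideal.pow_mem_of_mem _ hbm _ (by omega)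
      have := Ideal.add_mem _ h3 h4
      rw [sub_add_cancel] at this
      exact this isUnit_one
    have h5 := (Ideal.unit_mul_mem_iff_mem (Ideal.span {a + b ^ (k + 1)}) hu
      (x := b ^ (k+1))).1 (by rwa [mul_comm])
    exact hp.1.mem_of_pow_mem _ h5
  obtain ⟨k, hkm⟩ := this
  set c := a + b ^ (k + 1)
  have hp := (span_prime hdim _ _ (hk k)).1
  obtain ⟨q, hq, hqle⟩ := Ideal.exists_minimalPrimes_le (I := ⊥) (J := Ideal.span {c}) bot_le
  have hqp : q.IsPrime := hq.1.1
  have hcq : c ∉ q := by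
    intro hc
    have : q = Ideal.span {c} := le_antisymm hqle ((Ideal.span_singleton_le_iff_mem _).2 hc)
    exact hkm (this ▸ hq)
  have hcm : c ∈ maximalIdeal R := (hk k) ▸ Ideal.subset_span (by simp [c])
  have hq0 : q = ⊥ := by
    refine Submodule.eq_bot_of_le_smul_of_le_jacobson_bot (Ideal.span {c}) q
      (IsNoetherian.noetherian q) ?_ ?_
    · intro x hx
      obtain ⟨y, rfl⟩ := Ideal.mem_span_singleton.1 (hqle hx)
      have hy : y ∈ q := (hqp.mem_or_mem hx).resolve_left hcq
      exact Submodule.smul_mem_smul (Ideal.mem_span_singleton_self c) hy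
    · rw [IsLocalRing.jacobson_eq_maximalIdeal _ bot_ne_top]
      exact (Ideal.span_singleton_le_iff_mem _).2 hcm
  rw [hq0] at hqp
  exact IsDomain.of_bot_isPrime R

theorem reduced_of_au {R : Type} [CommRing R] [IsLocalRing R] [IsNoetherianRing R]
    (hau : AnalyticallyUnramified R) : IsReduced R := by
  unfold AnalyticallyUnramified at hau
  have hinj : Function.Injective (algebraMap R (AdicCompletion (maximalIdeal R) R)) := by
    have := AdicCompletion.of_injective (maximalIdeal R) R
    exact this
  exact isReduced_of_injective _ hinj

theorem exists_nzd {R : Type} [CommRing R] [IsLocalRing R] [IsNoetherianRing R] [IsReduced R]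
    (hdim : ringKrullDim R = 2) : ∃ y ∈ maximalIdeal R, y ∈ nonZeroDivisors R := by
  have hfin : (minimalPrimes R).Finite := minimalPrimes.finite_of_isNoetherianRing R
  have h : ∃ y ∈ maximalIdeal R, ∀ q ∈ minimalPrimes R, y ∉ q := by
    by_contra! h
    have h1 : ((maximalIdeal R : Ideal R) : Set R) ⊆ ⋃ q ∈ hfin.toFinset, (q : Set R) := by
      intro y hy
      obtain ⟨q, hq, hyq⟩ := h y hy
      simp only [Set.mem_iUnion]
      exact ⟨q, hfin.mem_toFinset.2 hq, hyq⟩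
    obtain ⟨q, hq, hle⟩ := (Ideal.subset_union_prime (f := fun q : Ideal R => q) ⊥ ⊥ (by
      intro q hq _ _; exact (hfin.mem_toFinset.1 hq).1.1)).1 h1
    have hq := hfin.mem_toFinset.1 hq
    have hm : maximalIdeal R ∈ minimalPrimes R := by
      have : q = maximalIdeal R := le_antisymm (IsLocalRing.le_maximalIdeal hq.1.1.ne_top) hle
      exact this ▸ hq
    have h2 := IsLocalRing.maximalIdeal_height_eq_ringKrullDim (R := R)
    rw [hdim] at h2
    have h3 : (maximalIdeal R).height = 2 := WithBot.coe_injective h2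
    rw [Ideal.height_eq_zero_iff.2 hm] at h3
    exact absurd h3 (by decide)
  obtain ⟨y, hy, hyq⟩ := h
  refine ⟨y, hy, ?_⟩
  rw [mem_nonZeroDivisors_iff_right]
  intro r hr
  have h0 : r ∈ nilradical R := by
    rw [nilradical, ← Ideal.sInf_minimalPrimes, Ideal.mem_sInf]
    intro q hq
    exact (hq.1.1.mem_or_mem (hr ▸ q.zero_mem : r * y ∈ q)).resolve_right (hyq q hq)
  rw [nilradical_eq_zero] at h0
  simpa using h0

theorem loc_step {R : Type} [CommRing R] [IsLocalRing R] [IsNoetherianRing R] [IsReduced R]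
    (hdim : ringKrullDim R = 2) (hR1 : SerreR1 R) (z : FractionRing R) (hz : IsIntegral R z)
    (p : Ideal R) [p.IsPrime] (hp : p ≠ maximalIdeal R) :
    ∃ s : R, s ∉ p ∧ ∃ r : R, algebraMap R (FractionRing R) r = s • z := by
  have hlt : p < maximalIdeal R :=
    lt_of_le_of_ne (IsLocalRing.le_maximalIdeal (Ideal.IsPrime.ne_top inferInstance)) hp
  have h2 := IsLocalRing.maximalIdeal_height_eq_ringKrullDim (R := R)
  rw [hdim] at h2
  have h3 : (maximalIdeal R).height = 2 := WithBot.coe_injective h2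
  have h4 := Ideal.height_strict_mono_of_isPrime_of_isPrime hlt
  rw [h3] at h4
  have h5 : p.height ≤ 1 := Order.le_of_lt_add_one (by rw [one_add_one_eq_two]; exact h4)
  have h6 : ringKrullDim (Localization.AtPrime p) ≤ 1 := by
    rw [IsLocalization.AtPrime.ringKrullDim_eq_height p]
    exact_mod_cast h5
  obtain ⟨hN, s, hs, hc⟩ := hR1 p h6
  rw [← hc] at h6
  have hc1 : s.card ≤ 1 := WithTop.coe_le_coe.1 (WithBot.coe_le_coe.1 h6)
  have hpr : ∃ t, maximalIdeal (Localization.AtPrime p) = Ideal.span {t} := by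
    rw [Finset.card_le_one_iff_subset_singleton] at hc1
    obtain ⟨t, ht⟩ := hc1
    rcases Finset.subset_singleton_iff.1 ht with rfl | rfl
    · exact ⟨0, by rw [← hs]; simp⟩
    · exact ⟨t, by rw [← hs]; simp⟩
  obtain ⟨t, ht⟩ := hpr
  have : IsReduced (Localization.AtPrime p) := inferInstance
  obtain ⟨hd, hic⟩ := reduced_principal t ht
  let K := FractionRing (Localization.AtPrime p)
  have hreg : ∀ y : nonZeroDivisors R, IsUnit (algebraMap R K y) := by
    intro y
    rw [IsScalarTower.algebraMap_apply R (Localization.AtPrime p) K]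
    apply IsUnit.mk0
    intro h0
    rw [map_eq_zero_iff _ (IsFractionRing.injective (Localization.AtPrime p) K)] at h0
    rw [IsLocalization.map_eq_zero_iff p.primeCompl] at h0
    obtain ⟨m, hm⟩ := h0
    have := (mem_nonZeroDivisors_iff_right.1 y.2) _ hm
    exact m.2 (this ▸ p.zero_mem)
  let g : FractionRing R →+* K := IsLocalization.lift (M := nonZeroDivisors R) hreg
  have hg : ∀ r, g (algebraMap R _ r) = algebraMap R K r := fun r => IsLocalization.lift_eq hreg r
  let g' : FractionRing R →ₐ[R] K := { g with commutes' := hg }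
  have hz' : IsIntegral (Localization.AtPrime p) (g' z) := (hz.map g').tower_top
  obtain ⟨w, hw⟩ := IsIntegrallyClosed.isIntegral_iff.1 hz'
  obtain ⟨⟨c, s⟩, hcs⟩ := IsLocalization.surj p.primeCompl w
  obtain ⟨⟨a, b⟩, hab⟩ := IsLocalization.surj (nonZeroDivisors R) z
  -- z b = a, w s = c
  simp only at hcs hab
  have e1 : algebraMap R (Localization.AtPrime p) (s * a) = algebraMap R _ (b * c) := by
    apply IsFractionRing.injective (Localization.AtPrime p) K
    rw [map_mul, map_mul, map_mul, map_mul, ← hcs, map_mul, hw,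
      ← IsScalarTower.algebraMap_apply, ← IsScalarTower.algebraMap_apply,
      ← IsScalarTower.algebraMap_apply, ← hg a, ← hab, map_mul, hg]
    change _ * (g z * _) = _ * (g z * _)
    ring
  obtain ⟨u, hu⟩ := (IsLocalization.eq_iff_exists p.primeCompl _).1 e1
  refine ⟨u * s, (u * s).2, u * c, ?_⟩
  have hb : IsUnit (algebraMap R (FractionRing R) b) := IsLocalization.map_units _ b
  apply hb.mul_left_cancel
  rw [← map_mul, Algebra.smul_def]
  have : (b : R) * (u * c) = u * (s * a) := by rw [hu]; ring
  rw [this, map_mul, map_mul, ← hab]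
  rw [map_mul]
  ring

end S18

namespace S18

open Limits Opposite

section Hom
variable (R : Type) [CommRing R]

abbrev Y : ModuleCat.{0} R := ModuleCat.of R R

abbrev F : ModuleCat.{0} R ⥤ (ModuleCat.{0} R)ᵒᵖ :=
  ((linearYoneda R (ModuleCat.{0} R)).obj (Y R)).rightOp

instance : Injective (op (Y R)) := inferInstance

variable {R}

def til {X : ModuleCat.{0} R} (α : X ⟶ Y R) : (F R).obj X ⟶ op (Y R) :=
  (ModuleCat.ofHom (LinearMap.toSpanSingleton R (X ⟶ Y R) α)).op

theorem til_inj {X : ModuleCat.{0} R} {α β : X ⟶ Y R} (h : til α = til β) : α = β := by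
  have h1 := Quiver.Hom.op_inj h
  have h2 := congrArg (fun f => f.hom (1 : R)) h1
  have h3 : (1 : R) • α = (1 : R) • β := h2
  simpa using h3

theorem til_surj {X : ModuleCat.{0} R} (f : (F R).obj X ⟶ op (Y R)) : ∃ α, til α = f := by
  refine ⟨f.unop.hom (1 : R), ?_⟩
  apply Quiver.Hom.unop_inj
  apply ModuleCat.hom_ext
  apply LinearMap.ext_ring
  exact one_smul R (f.unop.hom (1 : R) : X ⟶ Y R)

theorem map_til {X X' : ModuleCat.{0} R} (f : X ⟶ X') (α : X' ⟶ Y R) :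
    (F R).map f ≫ til α = til (f ≫ α) := by
  apply Quiver.Hom.unop_inj
  apply ModuleCat.hom_ext
  apply LinearMap.ext_ring
  change f ≫ ((1 : R) • α) = (1 : R) • (f ≫ α)
  simp

theorem til_zero {X : ModuleCat.{0} R} : til (0 : X ⟶ Y R) = 0 := by
  apply Quiver.Hom.unop_inj
  apply ModuleCat.hom_ext
  apply LinearMap.ext_ring
  change (1 : R) • (0 : X ⟶ Y R) = 0
  simp

theorem til_sub {X : ModuleCat.{0} R} (α β : X ⟶ Y R) : til (α - β) = til α - til β := by
  apply Quiver.Hom.unop_inj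
  apply ModuleCat.hom_ext
  apply LinearMap.ext_ring
  change (1 : R) • (α - β) = (1 : R) • α - (1 : R) • β
  simp

/-- generic homology functional -/
def hcl {D : Type*} [Category* D] [Abelian D] (K : ChainComplex D ℕ) {T : D} (β : K.X 1 ⟶ T)
    (h : K.d 2 1 ≫ β = 0) : K.homology 1 ⟶ T :=
  K.homologyι 1 ≫ K.descOpcycles β 2 (by simp) h

theorem hcl_eq {D : Type*} [Category* D] [Abelian D] (K : ChainComplex D ℕ) {T : D}
    (β γ : K.X 1 ⟶ T) (h : K.d 2 1 ≫ β = 0) (h' : K.d 2 1 ≫ γ = 0) (ψ : K.X 0 ⟶ T)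
    (hψ : β - γ = K.d 1 0 ≫ ψ) : hcl K β h = hcl K γ h' := by
  rw [← sub_eq_zero]
  unfold hcl
  rw [← Preadditive.comp_sub]
  have := K.homologyι_descOpcycles_eq_zero_of_boundary (i := 1) (β - γ) 2 (by simp) ψ hψ
  rw [← this]
  congr 1
  rw [← cancel_epi (HomologicalComplex.pOpcycles _ 1)]
  simp

theorem hcl_zero {D : Type*} [Category* D] [Abelian D] (K : ChainComplex D ℕ) {T : D} [Injective T]
    (β : K.X 1 ⟶ T) (h : K.d 2 1 ≫ β = 0) (h0 : hcl K β h = 0) : ∃ ψ, β = K.d 1 0 ≫ ψ := by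
  let S : ShortComplex D :=
    ShortComplex.mk (K.homologyι 1) (K.fromOpcycles 1 0) (by simp)
  have hS : S.Exact := S.exact_of_f_is_kernel (K.homologyIsKernel 1 0 (by simp))
  have hψ := hS.comp_descToInjective _ h0
  refine ⟨hS.descToInjective _ h0, ?_⟩
  have := congrArg (fun f => K.pOpcycles 1 ≫ f) hψ
  simp only [S, HomologicalComplex.p_fromOpcycles_assoc, HomologicalComplex.p_descOpcycles] at this
  exact this.symm

theorem hcl_nat {D : Type*} [Category* D] [Abelian D] {K L : ChainComplex D ℕ} (g : K ⟶ L) {T : D}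
    (β : L.X 1 ⟶ T) (h : L.d 2 1 ≫ β = 0) :
    HomologicalComplex.homologyMap g 1 ≫ hcl L β h =
      hcl K (g.f 1 ≫ β) (by rw [← g.comm_assoc, h, comp_zero]) := by
  unfold hcl
  rw [HomologicalComplex.homologyι_naturality_assoc,
    HomologicalComplex.opcyclesMap_comp_descOpcycles]

theorem hcl_comp {D : Type*} [Category* D] [Abelian D] (K : ChainComplex D ℕ) {T T' : D}
    (β : K.X 1 ⟶ T) (h : K.d 2 1 ≫ β = 0) (f : T ⟶ T') :
    hcl K β h ≫ f = hcl K (β ≫ f) (by rw [reassoc_of% h, zero_comp]) := by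
  unfold hcl
  rw [Category.assoc, HomologicalComplex.descOpcycles_comp]

theorem hcl_congr {D : Type*} [Category* D] [Abelian D] (K : ChainComplex D ℕ) {T : D}
    {β γ : K.X 1 ⟶ T} (h : K.d 2 1 ≫ β = 0) (e : β = γ) : hcl K β h = hcl K γ (e ▸ h) := by
  subst e; rfl

section Gen
variable {C D : Type*} [Category* C] [Abelian C] [HasProjectiveResolutions C]
  [Category* D] [Abelian D] (G : C ⥤ D) [G.Additive] {T T' : D}

abbrev FK {X : C} (P : ProjectiveResolution X) : ChainComplex D ℕ :=
  (G.mapHomologicalComplex _).obj P.complex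

def gcls {X : C} (P : ProjectiveResolution X) (β : G.obj (P.complex.X 1) ⟶ T)
    (h : G.map (P.complex.d 2 1) ≫ β = 0) : (G.leftDerived 1).obj X ⟶ T :=
  (P.isoLeftDerivedObj G 1).hom ≫ hcl (FK G P) β h

theorem gcls_eq {X : C} (P : ProjectiveResolution X) (β γ : G.obj (P.complex.X 1) ⟶ T)
    (h : G.map (P.complex.d 2 1) ≫ β = 0) (h' : G.map (P.complex.d 2 1) ≫ γ = 0)
    (ψ : G.obj (P.complex.X 0) ⟶ T) (hψ : β - γ = G.map (P.complex.d 1 0) ≫ ψ) :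
    gcls G P β h = gcls G P γ h' :=
  congrArg (fun f => (P.isoLeftDerivedObj G 1).hom ≫ f) (hcl_eq (FK G P) β γ h h' ψ hψ)

theorem gcls_zero [Injective T] {X : C} (P : ProjectiveResolution X)
    (β : G.obj (P.complex.X 1) ⟶ T)
    (h : G.map (P.complex.d 2 1) ≫ β = 0) (h0 : gcls G P β h = 0) :
    ∃ ψ : G.obj (P.complex.X 0) ⟶ T, β = G.map (P.complex.d 1 0) ≫ ψ := by
  refine hcl_zero (FK G P) β h ?_
  have h1 : (P.isoLeftDerivedObj G 1).hom ≫ hcl (FK G P) β h =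
    (P.isoLeftDerivedObj G 1).hom ≫ 0 := h0.trans comp_zero.symm
  exact (Iso.cancel_iso_hom_left (P.isoLeftDerivedObj G 1) _ _).1 h1

theorem gcls_nat {X X' : C} (f : X ⟶ X') (P : ProjectiveResolution X)
    (P' : ProjectiveResolution X') (g : P.complex ⟶ P'.complex)
    (comm : g.f 0 ≫ P'.π.f 0 = P.π.f 0 ≫ f) (β : G.obj (P'.complex.X 1) ⟶ T)
    (h : G.map (P'.complex.d 2 1) ≫ β = 0) :
    (G.leftDerived 1).map f ≫ gcls G P' β h =
      gcls G P (G.map (g.f 1) ≫ β)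
        (by rw [← Category.assoc, ← G.map_comp, ← g.comm, G.map_comp, Category.assoc, h,
          comp_zero]) := by
  have h1 := ProjectiveResolution.isoLeftDerivedObj_hom_naturality f P P' g comm G 1
  have h2 := hcl_nat ((G.mapHomologicalComplex (ComplexShape.down ℕ)).map g) β h
  refine (Category.assoc _ _ _).symm.trans ?_
  refine (congrArg (fun t => t ≫ hcl (FK G P') β h) h1).trans ?_
  refine (Category.assoc _ _ _).trans ?_
  exact congrArg (fun f => (P.isoLeftDerivedObj G 1).hom ≫ f) h2

theorem gcls_comp {X : C} (P : ProjectiveResolution X) (β : G.obj (P.complex.X 1) ⟶ T)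
    (h : G.map (P.complex.d 2 1) ≫ β = 0) (f : T ⟶ T') :
    gcls G P β h ≫ f = gcls G P (β ≫ f) (by rw [reassoc_of% h, zero_comp]) := by
  refine (Category.assoc _ _ _).trans ?_
  exact congrArg (fun f => (P.isoLeftDerivedObj G 1).hom ≫ f) (hcl_comp (FK G P) β h f)

theorem gcls_congr {X : C} (P : ProjectiveResolution X) {β γ : G.obj (P.complex.X 1) ⟶ T}
    (e : β = γ) (h : G.map (P.complex.d 2 1) ≫ β = 0) (h' : G.map (P.complex.d 2 1) ≫ γ = 0) :
    gcls G P β h = gcls G P γ h' := by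
  subst e; rfl

end Gen

theorem d_til {X : ModuleCat.{0} R} (P : ProjectiveResolution X) {α : P.complex.X 1 ⟶ Y R}
    (h : P.complex.d 2 1 ≫ α = 0) : (F R).map (P.complex.d 2 1) ≫ til α = 0 := by
  rw [map_til, h, til_zero]

/-- class of a cocycle -/
def cls {X : ModuleCat.{0} R} (P : ProjectiveResolution X) (α : P.complex.X 1 ⟶ Y R)
    (h : P.complex.d 2 1 ≫ α = 0) : ((F R).leftDerived 1).obj X ⟶ op (Y R) :=
  gcls (F R) P (til α) (d_til P h)

theorem cls_sub {X : ModuleCat.{0} R} (P : ProjectiveResolution X) (α β : P.complex.X 1 ⟶ Y R)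
    (h : P.complex.d 2 1 ≫ α = 0) (h' : P.complex.d 2 1 ≫ β = 0) (ψ : P.complex.X 0 ⟶ Y R)
    (hψ : α - β = P.complex.d 1 0 ≫ ψ) : cls P α h = cls P β h' := by
  refine gcls_eq (F R) P (til α) (til β) (d_til P h) (d_til P h') (til ψ) ?_
  rw [← til_sub, hψ, ← map_til]

theorem cls_zero {X : ModuleCat.{0} R} (P : ProjectiveResolution X) (α : P.complex.X 1 ⟶ Y R)
    (h : P.complex.d 2 1 ≫ α = 0) (h0 : cls P α h = 0) :
    ∃ ψ : P.complex.X 0 ⟶ Y R, α = P.complex.d 1 0 ≫ ψ := by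
  obtain ⟨ψ', h2⟩ := gcls_zero _ _ _ _ h0
  obtain ⟨ψ, rfl⟩ := til_surj ψ'
  refine ⟨ψ, til_inj ?_⟩
  rw [← map_til, h2]

theorem cls_nat {X X' : ModuleCat.{0} R} (f : X ⟶ X') (P : ProjectiveResolution X)
    (P' : ProjectiveResolution X') (g : P.complex ⟶ P'.complex)
    (comm : g.f 0 ≫ P'.π.f 0 = P.π.f 0 ≫ f) (α : P'.complex.X 1 ⟶ Y R)
    (h : P'.complex.d 2 1 ≫ α = 0) :
    ((F R).leftDerived 1).map f ≫ cls P' α h =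
      cls P (g.f 1 ≫ α) (by rw [← g.comm_assoc, h, comp_zero]) := by
  refine (gcls_nat (F R) f P P' g comm (til α) (d_til P' h)).trans ?_
  exact gcls_congr _ _ (map_til (g.f 1) α) _ _

theorem cls_smul {X : ModuleCat.{0} R} (P : ProjectiveResolution X) (α : P.complex.X 1 ⟶ Y R)
    (h : P.complex.d 2 1 ≫ α = 0) (y : R) :
    cls P α h ≫ (y • 𝟙 (Y R)).op = cls P (y • α) (by rw [Linear.comp_smul, h, smul_zero]) := by
  have e : til α ≫ (y • 𝟙 (Y R)).op = til (y • α) := by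
    apply Quiver.Hom.unop_inj
    apply ModuleCat.hom_ext
    apply LinearMap.ext_ring
    change (y • (1 : R)) • α = (1 : R) • (y • α)
    simp
  exact (gcls_comp _ _ _ _ _).trans (gcls_congr _ _ e _ _)

/-- cocycle attached to a homomorphism `φ : I → R`. -/
theorem exists_coc (I : Ideal R) (P : ProjectiveResolution (ModuleCat.of R (R ⧸ I)))
    (φ : I →ₗ[R] R) : ∃ (l : P.complex.X 0 ⟶ Y R)
      (α : P.complex.X 1 ⟶ Y R) (_ : ∀ p, Submodule.Quotient.mk (p := I) (l.hom p) = (P.π.f 0).hom p)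
      (hm : ∀ u, l.hom ((P.complex.d 1 0).hom u) ∈ I), P.complex.d 2 1 ≫ α = 0 ∧
      ∀ u, α.hom u = φ ⟨_, hm u⟩ := by
  let q : Y R ⟶ ModuleCat.of R (R ⧸ I) := ModuleCat.ofHom (Submodule.mkQ I)
  have hq : Epi q := (ModuleCat.epi_iff_surjective _).2 (Submodule.mkQ_surjective I)
  have := P.projective 0
  let π0 : P.complex.X 0 ⟶ ModuleCat.of R (R ⧸ I) := P.π.f 0
  let l : P.complex.X 0 ⟶ Y R := Projective.factorThru π0 q
  have hlq : l ≫ q = π0 := Projective.factorThru_comp _ _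
  have hl : ∀ p, Submodule.Quotient.mk (p := I) (l.hom p) = (P.π.f 0).hom p := by
    intro p
    exact congrArg (fun f => f.hom p) hlq
  have hm : ∀ u, l.hom ((P.complex.d 1 0).hom u) ∈ I := by
    intro u
    rw [← Submodule.Quotient.mk_eq_zero, hl]
    exact congrArg (fun f => f.hom u) P.complex_d_comp_π_f_zero
  refine ⟨l, ModuleCat.ofHom (φ.comp ((l.hom.comp (P.complex.d 1 0).hom).codRestrict I hm)),
    hl, hm, ?_, fun u => rfl⟩
  ext u
  have e : (P.complex.d 1 0).hom ((P.complex.d 2 1).hom u) = 0 :=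
    congrArg (fun f => f.hom u) (P.complex.d_comp_d 2 1 0)
  change φ ⟨l.hom ((P.complex.d 1 0).hom ((P.complex.d 2 1).hom u)), _⟩ = 0
  rw [← map_zero φ]
  congr 1
  apply Subtype.ext
  simp [e]


theorem core (I : Ideal R) (φ : I →ₗ[R] R) :
    ∃ e : ((F R).leftDerived 1).obj (ModuleCat.of R (R ⧸ I)) ⟶ op (Y R),
      ∀ (I' : Ideal R) (hle : I' ≤ I)
        (f : ModuleCat.of R (R ⧸ I') ⟶ ModuleCat.of R (R ⧸ I))
        (_ : f = ModuleCat.ofHom (Submodule.mapQ I' I LinearMap.id hle)) (y : R),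
        ((F R).leftDerived 1).map f ≫ e ≫ (y • 𝟙 (Y R)).op = 0 →
        ∃ r : R, ∀ (j : R) (hj : j ∈ I'), y * φ ⟨j, hle hj⟩ = r * j := by
  let P := projectiveResolution (ModuleCat.of R (R ⧸ I))
  obtain ⟨l, α, hl, hm, hα, hαφ⟩ := exists_coc I P φ
  refine ⟨cls P α hα, ?_⟩
  intro I' hle f hf y h0
  let P' := projectiveResolution (ModuleCat.of R (R ⧸ I'))
  obtain ⟨l', α', hl', hm', hα', hαφ'⟩ := exists_coc I' P' (φ.comp (Submodule.inclusion hle))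
  let g := ProjectiveResolution.lift f P' P
  have comm : g.f 0 ≫ P.π.f 0 = P'.π.f 0 ≫ f := ProjectiveResolution.lift_commutes_zero f P' P
  have hdiff : ∀ p, l.hom ((g.f 0).hom p) - l'.hom p ∈ I := by
    intro p
    rw [← Submodule.Quotient.mk_eq_zero, Submodule.Quotient.mk_sub, hl]
    have h1 : (P.π.f 0).hom ((g.f 0).hom p) = f.hom ((P'.π.f 0).hom p) :=
      congrArg (fun f => f.hom p) comm
    have h2 : f.hom (Submodule.Quotient.mk (p := I') (l'.hom p)) =
        Submodule.Quotient.mk (p := I) (l'.hom p) := by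
      rw [hf]; rfl
    rw [← h2, hl']
    exact (sub_eq_zero (G := R ⧸ I)).2 h1
  let ψ : P'.complex.X 0 ⟶ Y R := ModuleCat.ofHom (φ.comp
    ((l.hom.comp (g.f 0).hom - l'.hom).codRestrict I hdiff))
  have hga : P'.complex.d 2 1 ≫ g.f 1 ≫ α = 0 := by rw [← g.comm_assoc, hα, comp_zero]
  have e1 : g.f 1 ≫ α - α' = P'.complex.d 1 0 ≫ ψ := by
    ext u
    change α.hom ((g.f 1).hom u) - α'.hom u = φ ⟨l.hom ((g.f 0).hom ((P'.complex.d 1 0).hom u))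
      - l'.hom ((P'.complex.d 1 0).hom u), hdiff _⟩
    rw [hαφ, hαφ', LinearMap.comp_apply, ← map_sub]
    congr 1
    apply Subtype.ext
    change l.hom _ - l'.hom _ = l.hom _ - l'.hom _
    have h3 : (P.complex.d 1 0).hom ((g.f 1).hom u) = (g.f 0).hom ((P'.complex.d 1 0).hom u) :=
      congrArg (fun f => f.hom u) (g.comm 1 0)
    rw [h3]
  have e2 : ((F R).leftDerived 1).map f ≫ cls P α hα = cls P' α' hα' :=
    (cls_nat f P' P g comm α hα).trans (cls_sub P' _ _ _ hα' ψ e1)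
  have e3 : cls P' (y • α') (by rw [Linear.comp_smul, hα', smul_zero]) = 0 := by
    rw [← cls_smul P' α' hα' y, ← e2, Category.assoc]
    exact h0
  obtain ⟨θ, hθ⟩ := cls_zero _ _ _ e3
  -- now conclude
  have hsurj : Function.Surjective (P'.π.f 0).hom :=
    (ModuleCat.epi_iff_surjective (P'.π.f 0)).1 inferInstance
  obtain ⟨p, hp⟩ := hsurj (Submodule.Quotient.mk (p := I') (1 : R))
  have hj0 : l'.hom p - 1 ∈ I' := by
    rw [← Submodule.Quotient.mk_eq_zero, Submodule.Quotient.mk_sub, hl']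
    exact (sub_eq_zero (G := R ⧸ I')).2 hp
  refine ⟨θ.hom p - y * φ ⟨l'.hom p - 1, hle hj0⟩, fun j hj => ?_⟩
  have hker : (P'.π.f 0).hom (j • p) = 0 := by
    rw [← hl', map_smul]
    exact (Submodule.Quotient.mk_eq_zero I').2 (I'.mul_mem_right _ hj)
  obtain ⟨u, hu⟩ : ∃ u, (P'.complex.d 1 0).hom u = j • p :=
    (ShortComplex.moduleCat_exact_iff _).1 P'.exact₀ (j • p) hker
  have e4 : y • α'.hom u = θ.hom ((P'.complex.d 1 0).hom u) := congrArg (fun f => f.hom u) hθ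
  have e5 : (Submodule.inclusion hle) ⟨l'.hom ((P'.complex.d 1 0).hom u), hm' u⟩ =
      (⟨j, hle hj⟩ : I) + j • (⟨l'.hom p - 1, hle hj0⟩ : I) := by
    apply Subtype.ext
    change l'.hom ((P'.complex.d 1 0).hom u) = j + j * (l'.hom p - 1)
    rw [hu, map_smul, smul_eq_mul]
    ring
  have e6 : θ.hom ((P'.complex.d 1 0).hom u) = j * θ.hom p := by
    rw [hu, map_smul]; rfl
  rw [hαφ', e6, LinearMap.comp_apply, e5, map_add, map_smul] at e4
  simp only [smul_eq_mul] at e4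
  linear_combination e4

theorem lc_key (R : Type) [CommRing R] (J : Ideal R) (y : R)
    (hy : y ∈ Module.annihilator R ((localCohomology J 1).obj (ModuleCat.of R R))) (n : ℕ)
    (φ : ↥(J ^ n) →ₗ[R] R) : ∃ k, n ≤ k ∧ ∃ r : R, ∀ (j : R) (_ : j ∈ J ^ k) (hj' : j ∈ J ^ n),
      y * φ ⟨j, hj'⟩ = r * j := by
  obtain ⟨e, he⟩ := core (J ^ n) φ
  let D := localCohomology.diagram (localCohomology.idealPowersDiagram J) 1
  have hD : HasColimit D := localCohomology.hasColimitDiagram.{0, 0} _ _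
  let ev := (evaluation (ModuleCat.{0} R) (ModuleCat.{0} R)).obj (ModuleCat.of R R)
  let cc := ev.mapCocone (colimit.cocone D)
  have hcc : IsColimit cc := isColimitOfPreserves ev (colimit.isColimit D)
  let ε : ((D ⋙ ev).obj (op (op n)) : ModuleCat.{0} R) := e.unop.hom (1 : R)
  have h0 : cc.ι.app (op (op n)) (y • ε) = cc.ι.app (op (op n)) 0 := by
    rw [map_zero, map_smul]
    exact (Module.mem_annihilator.1 hy) _
  obtain ⟨k, f, f', hk⟩ := Concrete.isColimit_exists_of_rep_eq (D ⋙ ev) hcc _ _ h0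
  rw [map_zero] at hk
  have hnk : n ≤ k.unop.unop := leOfHom f.unop.unop
  refine ⟨k.unop.unop, hnk, ?_⟩
  obtain ⟨r, hr⟩ := he (J ^ k.unop.unop) (Ideal.pow_le_pow_right hnk)
    ((localCohomology.ringModIdeals (localCohomology.idealPowersDiagram J)).map f.unop) rfl y (by
      apply Quiver.Hom.unop_inj
      apply ModuleCat.hom_ext
      apply LinearMap.ext_ring
      refine Eq.trans ?_ hk
      change ((D ⋙ ev).map f).hom (e.unop.hom (y • (1 : R))) = ((D ⋙ ev).map f).hom (y • ε)
      exact congrArg _ (map_smul e.unop.hom y (1 : R)))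
  exact ⟨r, fun j hj _ => hr j hj⟩

end Hom
end S18

namespace S18

theorem key_mul (R : Type) [CommRing R] [IsLocalRing R] [IsNoetherianRing R] [IsReduced R]
    (hdim : ringKrullDim R = 2) (hR1 : SerreR1 R)
    (hqb : maximalIdeal R ≤ Module.annihilator R (localCohMod R 1 R))
    (z : FractionRing R) (hz : IsIntegral R z) (y : R) (hy : y ∈ maximalIdeal R) :
    ∃ r : R, algebraMap R (FractionRing R) r = y • z := by
  let I : Ideal R := (LinearMap.range (Algebra.linearMap R (FractionRing R))).comap
    (LinearMap.toSpanSingleton R (FractionRing R) z)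
  have hI : ∀ s, s ∈ I ↔ ∃ r : R, algebraMap R (FractionRing R) r = s • z := by
    intro s; simp [I]
  have hrad : maximalIdeal R ≤ I.radical := by
    rw [Ideal.radical_eq_sInf]
    refine le_sInf ?_
    rintro p ⟨hIp, hp⟩
    by_contra hne
    obtain ⟨s, hs, hr⟩ := loc_step hdim hR1 z hz p (fun h => hne (h ▸ le_rfl))
    exact hs (hIp ((hI s).2 hr))
  obtain ⟨n, hn⟩ := Ideal.exists_pow_le_of_le_radical_of_fg hrad (IsNoetherian.noetherian _)
  have hinj : Function.Injective (Algebra.linearMap R (FractionRing R)) :=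
    IsFractionRing.injective R (FractionRing R)
  let φ : ↥(maximalIdeal R ^ n) →ₗ[R] R :=
    (LinearEquiv.ofInjective (Algebra.linearMap R (FractionRing R)) hinj).symm.toLinearMap.comp
      (((LinearMap.toSpanSingleton R (FractionRing R) z).comp
        (Submodule.subtype (maximalIdeal R ^ n))).codRestrict _ (fun c => hn c.2))
  have hφ : ∀ c, algebraMap R (FractionRing R) (φ c) = (c : R) • z := by
    intro c
    have := LinearEquiv.apply_symm_apply
      (LinearEquiv.ofInjective (Algebra.linearMap R (FractionRing R)) hinj)
      ((((LinearMap.toSpanSingleton R (FractionRing R) z).comp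
        (Submodule.subtype (maximalIdeal R ^ n))).codRestrict _ (fun c => hn c.2)) c)
    exact congrArg Subtype.val this
  obtain ⟨k, hk, r, hr⟩ := lc_key R (maximalIdeal R) y (hqb hy) n φ
  obtain ⟨w, hw, hwn⟩ := exists_nzd hdim
  have h1 := hr (w ^ k) (Ideal.pow_mem_pow hw k) (Ideal.pow_le_pow_right hk (Ideal.pow_mem_pow hw k))
  refine ⟨r, ?_⟩
  have hu : IsUnit (algebraMap R (FractionRing R) (w ^ k)) :=
    IsLocalization.map_units (FractionRing R) (⟨w ^ k, pow_mem hwn k⟩ : nonZeroDivisors R)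
  apply hu.mul_right_cancel
  rw [← map_mul, ← h1, map_mul, hφ, Algebra.smul_def, Algebra.smul_def]
  ring

theorem mem_conductor (R : Type) [CommRing R] (y : R)
    (h : ∀ z : FractionRing R, IsIntegral R z → ∃ r : R, algebraMap R (FractionRing R) r = y • z) :
    y ∈ conductorIdeal R := by
  rw [conductorIdeal, Module.mem_annihilator]
  intro q
  obtain ⟨⟨z, hz⟩, rfl⟩ := Submodule.Quotient.mk_surjective _ q
  rw [← Submodule.Quotient.mk_smul, Submodule.Quotient.mk_eq_zero]
  obtain ⟨r, hr⟩ := h z hz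
  exact ⟨r, Subtype.ext hr⟩

theorem normal_case (R : Type) [CommRing R] [IsLocalRing R] [IsNoetherianRing R]
    (hdim : ringKrullDim R = 2) (a b : R) (h : maximalIdeal R = Ideal.span {a, b})
    (z : FractionRing R)
    (ha : ∃ r : R, algebraMap R (FractionRing R) r = a • z)
    (hb : ∃ r : R, algebraMap R (FractionRing R) r = b • z) :
    ∃ r : R, algebraMap R (FractionRing R) r = z := by
  have hd := domain_of_two hdim a b h
  obtain ⟨hp, hba⟩ := span_prime hdim a b h
  have ha0 : a ≠ 0 := by
    rintro rfl
    have := (span_prime hdim b 0 (by rw [h, Set.pair_comm])).2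
    exact this (Ideal.zero_mem _)
  have hinj := IsFractionRing.injective R (FractionRing R)
  obtain ⟨r, hr⟩ := ha
  obtain ⟨s, hs⟩ := hb
  have e : b * r = a * s := by
    apply hinj
    rw [map_mul, map_mul, hr, hs, Algebra.smul_def, Algebra.smul_def]; ring
  have h1 : r ∈ Ideal.span {a} := (hp.mem_or_mem
    (Ideal.mem_span_singleton.2 ⟨s, e⟩ : b * r ∈ _)).resolve_left hba
  obtain ⟨t, rfl⟩ := Ideal.mem_span_singleton.1 h1
  refine ⟨t, ?_⟩
  rw [map_mul, Algebra.smul_def] at hr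
  exact mul_left_cancel₀ (by simpa using ha0) hr

end S18

-- STATEMENT 18
theorem stmt18 (R : Type) [CommRing R] [IsLocalRing R] [IsNoetherianRing R]
    (hau : AnalyticallyUnramified R) (hdim : ringKrullDim R = 2)
    (hR1 : SerreR1 R)
    (hqb : maximalIdeal R ≤ Module.annihilator R (localCohMod R 1 R)) :
    ∀ x : Fin 2 → R, IsSystemOfParameters R x →
      ¬ conductorIdeal R ≤ Ideal.span (Set.range x) := by
  intro x hx hle
  have := S18.reduced_of_au hau
  have hkey := S18.key_mul R hdim hR1 hqb
  have hmc : maximalIdeal R ≤ conductorIdeal R :=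
    fun y hy => S18.mem_conductor R y (fun z hz => hkey z hz y hy)
  have hxm : Ideal.span (Set.range x) ≤ maximalIdeal R := by
    rw [Ideal.span_le]
    rintro _ ⟨i, rfl⟩
    exact hx.2.1 i
  have hm : maximalIdeal R = Ideal.span {x 0, x 1} := by
    have h1 : Set.range x = {x 0, x 1} := by
      ext y; simp [Fin.exists_fin_two, eq_comm]
    rw [← h1]
    exact le_antisymm (hmc.trans hle) hxm
  have h1 : (1 : R) ∈ conductorIdeal R := by
    refine S18.mem_conductor R 1 (fun z hz => ?_)
    rw [one_smul]
    exact S18.normal_case R hdim _ _ hm z (hkey z hz _ (hx.2.1 0)) (hkey z hz _ (hx.2.1 1))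
  exact (Ideal.ne_top_iff_one _).1 (Ideal.IsPrime.ne_top inferInstance) (hxm (hle h1))
end
end
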